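/- arXiv:2207.11758 — 3 statements merged into one kernel-verified Lean document; each statement's English description precedes it below -/
import Mathlib

section
/- For every integer k ≥ 2 there exists a constant C_k > 0 such that for all integers V₁, U₂, …, U_k ≥ 1 and every sign ε₁ ∈ {−1, 1}: ∑ τ_k(u₂)⋯τ_k(u_k)·τ_k(ε₁v₁ + u₂u₃⋯u_k) ≤ C_k · L_k(V₁U₂⋯U_k), where the sum runs over integers v₁, u₂, …, u_k ≥ 1 with U_i ≤ u_i < 2U_i for each 2 ≤ i ≤ k and 1 ≤ v₁ ≤ V₁, and where L_k(r) := r·(1 + log r)^{k²+2} for r ≥ 1 and log denotes the natural logarithm. -/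
/-- `τ_k(m)` for `m : ℤ`: the number of `k`-tuples of positive integers with
product `m`; in particular `τ_k(m) = 0` for `m ≤ 0`. -/
noncomputable def tauInt (k : ℕ) (m : ℤ) : ℕ :=
  Nat.card {d : Fin k → ℤ // (∀ i, 0 < d i) ∧ ∏ i, d i = m}

/-!
Grouping the `u`'s by their product `n` bounds the sum by `∑ τ_m(n) τ_k(ε₁v + n)` over `v ≤ V₁`
and `n ≤ N`, where `m = k(k - 1)` and `N ≍ U₂⋯U_k`.

Both divisor functions are then replaced by short sums over divisors. Put `Q = 2 max(N, V₁)` and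
`w = Q ^ (1/8)`. Multiplying up the prime factors of `n ≤ Q` in increasing order and stopping at the
prime `q` that makes the product exceed `w` writes `n = b q c` with `b ≤ w`, `b` free of primes
above `q` and `c` free of primes below `q`. The rough part `c` has so few prime factors that
`τ_m(c) ≪ w ^ α` with `α ≪ 1 / log q`, whence `τ_m(n)` is dominated by the weight
`τ_m(d) d ^ α(d)` of one divisor `d ≤ w ^ 2` of `n`, where `α(d)` depends only on the largest prime
factor of `d`.

For divisors `b`, `d ≤ Q ^ (1/4)` of `n` and `ε₁v + n`, the pairs `(v, n)` number
`O(V₁ N / (b d))`, so it remains to bound `∑ τ_m(b) b ^ (α(b) - 1)`. Fixing the largest prime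
factor `q` of `b`, Rankin's trick and an Euler product over `p ≤ q` give `O((log q) ^ m / q)`; the
shift `α ≪ 1 / log q` costs only a constant because `∑_{p ≤ q} (log p) / p ≪ log q`. Summing over
`q` yields the exponent `m + 1`, and `(m + 1) + (k + 1) = k ^ 2 + 2`.
-/

section

open Finset

/-! ### Divisor functions -/

theorem arithmeticFunction_prod_apply {R : Type*} [CommSemiring R] {k : ℕ}
    (f : Fin k → ArithmeticFunction R) (n : ℕ) :
    (∏ i, f i) n = ∑ d ∈ Nat.finMulAntidiag k n, ∏ i, f i (d i) := by
  induction k generalizing n with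
  | zero =>
    obtain rfl | hn := eq_or_ne n 1
    · simp [Nat.finMulAntidiag_one]
    · simp [Nat.finMulAntidiag_zero_left hn, ArithmeticFunction.one_apply_ne hn]
  | succ k ih =>
    rw [Fin.prod_univ_succ, ArithmeticFunction.mul_apply]
    simp_rw [ih, mul_sum]
    rw [sum_sigma']
    refine sum_bij' (fun x _ => Fin.cons x.1.1 x.2)
      (fun d _ => ⟨(d 0, ∏ i, Fin.tail d i), Fin.tail d⟩) ?_ ?_ ?_ ?_ ?_
    · rintro ⟨⟨a, b⟩, d⟩ h
      simp only [mem_sigma, Nat.mem_divisorsAntidiagonal, Nat.mem_finMulAntidiag] at h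
      simp [Nat.mem_finMulAntidiag, Fin.prod_univ_succ, h]
    · intro d hd
      rw [Nat.mem_finMulAntidiag, Fin.prod_univ_succ] at hd
      have hprod : d 0 * ∏ i : Fin k, d i.succ ≠ 0 := hd.1.symm ▸ hd.2
      simp only [mem_sigma, Nat.mem_divisorsAntidiagonal, Nat.mem_finMulAntidiag, Fin.tail]
      exact ⟨hd, trivial, right_ne_zero_of_mul hprod⟩
    · rintro ⟨⟨a, b⟩, d⟩ h
      simp only [mem_sigma, Nat.mem_divisorsAntidiagonal, Nat.mem_finMulAntidiag] at h
      simp [h.2.1]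
    · simp
    · simp [Fin.prod_univ_succ]

/-- The `k`-fold divisor function `τ_k` on natural numbers, as the `k`-th Dirichlet power of the
constant function `1`. By convention `τ_k(0) = 0`. -/
def tau (k n : ℕ) : ℕ := (ArithmeticFunction.zeta ^ k) n

theorem sum_finMulAntidiag_prod_tau {j : ℕ} (κ : Fin j → ℕ) (n : ℕ) :
    ∑ u ∈ Nat.finMulAntidiag j n, ∏ i, tau (κ i) (u i) = tau (∑ i, κ i) n := by
  rw [tau, ← prod_pow_eq_pow_sum, arithmeticFunction_prod_apply]
  rfl

theorem tau_eq_card_finMulAntidiag (k n : ℕ) : tau k n = #(Nat.finMulAntidiag k n) := by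
  have hpow : ArithmeticFunction.zeta ^ k = ∏ _i : Fin k, ArithmeticFunction.zeta := by simp
  rw [tau, hpow, arithmeticFunction_prod_apply, card_eq_sum_ones]
  refine sum_congr rfl fun d hd => prod_eq_one fun i _ => ?_
  simp [Nat.ne_zero_of_mem_finMulAntidiag hd i]

theorem tauInt_eq_tau_toNat (k : ℕ) (t : ℤ) : tauInt k t = tau k t.toNat := by
  rw [tau_eq_card_finMulAntidiag, tauInt, ← Nat.card_eq_finsetCard]
  refine Nat.card_congr
    { toFun := fun d => ⟨fun i => (d.1 i).toNat, ?_⟩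
      invFun := fun d => ⟨fun i => (d.1 i : ℤ), fun i => ?_, ?_⟩
      left_inv := fun d => by ext i; exact Int.toNat_of_nonneg (d.2.1 i).le
      right_inv := fun d => by ext i; simp }
  · obtain ⟨d, hd, rfl⟩ := d
    have hcast : ∏ i, d i = ((∏ i, (d i).toNat : ℕ) : ℤ) := by
      push_cast
      exact prod_congr rfl fun i _ => (Int.toNat_of_nonneg (hd i).le).symm
    have hprod : (∏ i, d i).toNat = ∏ i, (d i).toNat := by rw [hcast, Int.toNat_natCast]
    rw [Nat.mem_finMulAntidiag, hprod]
    exact ⟨rfl, prod_ne_zero_iff.2 fun i _ => by have := hd i; omega⟩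
  · exact Int.natCast_pos.2 <| Nat.pos_of_ne_zero (Nat.ne_zero_of_mem_finMulAntidiag d.2 i)
  · have hd := Nat.mem_finMulAntidiag.1 d.2
    rw [← Nat.cast_prod, hd.1]
    omega

theorem tauInt_natCast (k n : ℕ) : tauInt k n = tau k n := by
  rw [tauInt_eq_tau_toNat, Int.toNat_natCast]

theorem tau_zero_right (k : ℕ) : tau k 0 = 0 := by simp [tau]

theorem tau_zero_left (n : ℕ) : tau 0 n = if n = 1 then 1 else 0 := by
  simp [tau, ArithmeticFunction.one_apply]

theorem tau_succ (k n : ℕ) : tau (k + 1) n = ∑ d ∈ n.divisors, tau k d := by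
  rw [tau, pow_succ, ArithmeticFunction.mul_zeta_apply]
  rfl

theorem tau_one_right (k : ℕ) : tau k 1 = 1 := by
  induction k with
  | zero => simp [tau_zero_left]
  | succ k ih => simp [tau_succ, ih]

theorem tau_prime (k : ℕ) {p : ℕ} (hp : p.Prime) : tau k p = k := by
  induction k with
  | zero => simp [tau_zero_left, hp.ne_one]
  | succ k ih => rw [tau_succ, hp.sum_divisors, ih, tau_one_right]

theorem tau_mul_le (k a b : ℕ) : tau k (a * b) ≤ tau k a * tau k b := by
  induction k generalizing a b with
  | zero =>
    simp only [tau_zero_left, mul_eq_one]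
    split_ifs <;> simp_all
  | succ k ih =>
    simp only [tau_succ, sum_mul_sum, ← sum_product']
    rw [Nat.divisors_mul, mul_def]
    exact (sum_image_le_of_nonneg fun _ _ => Nat.zero_le _).trans
      (sum_le_sum fun x _ => ih _ _)

theorem tau_le_card_divisors_pow (k : ℕ) {n : ℕ} (hn : n ≠ 0) : tau k n ≤ #n.divisors ^ k := by
  induction k generalizing n with
  | zero =>
    rw [tau_zero_left]
    split_ifs <;> simp
  | succ k ih =>
    rw [tau_succ, pow_succ']
    refine sum_le_card_nsmul _ _ _ fun d hd => ?_
    have hdn := Nat.dvd_of_mem_divisors hd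
    exact (ih (ne_zero_of_dvd_ne_zero hn hdn)).trans <|
      Nat.pow_le_pow_left (card_le_card (Nat.divisors_subset_of_dvd hn hdn)) k

theorem natCast_add_one_le_pow {x : ℝ} (hx : 2 ≤ x) (v : ℕ) : (v : ℝ) + 1 ≤ x ^ v := by
  have hbern := one_add_mul_sub_le_pow (by linarith : -1 ≤ x) v
  nlinarith [(Nat.cast_nonneg v : (0 : ℝ) ≤ v)]

theorem natCast_add_one_le_mul_pow {x : ℝ} (hx : 1 < x) (v : ℕ) :
    (v : ℝ) + 1 ≤ (1 + 1 / (x - 1)) * x ^ v := by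
  have hx0 : 0 < x - 1 := sub_pos.2 hx
  calc (v : ℝ) + 1 ≤ v + 1 + (v * (x - 1) + 1 / (x - 1)) := le_add_of_nonneg_right (by positivity)
    _ = (1 + 1 / (x - 1)) * (1 + v * (x - 1)) := by field_simp; ring
    _ ≤ (1 + 1 / (x - 1)) * x ^ v := by
      gcongr
      exact one_add_mul_sub_le_pow (by linarith) v

theorem exists_card_divisors_le_rpow {ε : ℝ} (hε : 0 < ε) :
    ∃ D > 0, ∀ n : ℕ, n ≠ 0 → (#n.divisors : ℝ) ≤ D * (n : ℝ) ^ ε := by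
  set K : ℝ := 1 + 1 / ((2 : ℝ) ^ ε - 1)
  set N := ⌈(2 : ℝ) ^ (1 / ε)⌉₊
  have htwo : 1 < (2 : ℝ) ^ ε := Real.one_lt_rpow one_lt_two hε
  have hK : 1 ≤ K := le_add_of_nonneg_right (one_div_nonneg.2 (sub_nonneg.2 htwo.le))
  have hlarge : ∀ p : ℕ, N ≤ p → 2 ≤ (p : ℝ) ^ ε := fun p hp => by
    calc (2 : ℝ) = ((2 : ℝ) ^ (1 / ε)) ^ ε := by
          rw [← Real.rpow_mul two_pos.le, one_div_mul_cancel hε.ne', Real.rpow_one]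
      _ ≤ (p : ℝ) ^ ε := by
          gcongr
          exact (Nat.le_ceil _).trans (mod_cast hp)
  have hlocal : ∀ p : ℕ, p.Prime → ∀ v : ℕ,
      (v : ℝ) + 1 ≤ (if p < N then K else 1) * ((p : ℝ) ^ ε) ^ v := fun p hp v => by
    split_ifs with hpN
    · refine (natCast_add_one_le_mul_pow htwo v).trans ?_
      gcongr
      exact_mod_cast hp.two_le
    · rw [one_mul]
      exact natCast_add_one_le_pow (hlarge p (not_lt.1 hpN)) v
  refine ⟨K ^ N, by positivity, fun n hn => ?_⟩
  have hfact : ∏ p ∈ n.primeFactors, ((p : ℝ) ^ ε) ^ n.factorization p = (n : ℝ) ^ ε := by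
    simp_rw [Real.rpow_pow_comm (Nat.cast_nonneg _)]
    rw [Real.finsetProd_rpow _ _ fun _ _ => by positivity]
    exact_mod_cast congrArg (fun x : ℕ => (x : ℝ) ^ ε) (Nat.prod_factorization_pow_eq_self hn)
  have hsmall : #{p ∈ n.primeFactors | p < N} ≤ N := by
    simpa using card_le_card (t := range N) fun p hp => mem_range.2 (mem_filter.1 hp).2
  calc (#n.divisors : ℝ) = ∏ p ∈ n.primeFactors, ((n.factorization p : ℝ) + 1) := by
        rw [Nat.card_divisors hn]
        push_cast
        rfl
    _ ≤ ∏ p ∈ n.primeFactors, (if p < N then K else 1) * ((p : ℝ) ^ ε) ^ n.factorization p :=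
        prod_le_prod (fun _ _ => by positivity) fun p hp =>
          hlocal p (Nat.prime_of_mem_primeFactors hp) _
    _ = K ^ #{p ∈ n.primeFactors | p < N} * (n : ℝ) ^ ε := by
        rw [prod_mul_distrib, hfact, prod_ite, prod_const, prod_const_one, mul_one]
    _ ≤ K ^ N * (n : ℝ) ^ ε := by gcongr

theorem exists_tau_le_rpow (m : ℕ) {ε : ℝ} (hε : 0 < ε) :
    ∃ D > 0, ∀ n : ℕ, n ≠ 0 → (tau m n : ℝ) ≤ D * (n : ℝ) ^ ε := by
  obtain ⟨D, hD, hdiv⟩ := exists_card_divisors_le_rpow (ε := ε / (m + 1)) (by positivity)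
  refine ⟨D ^ m, by positivity, fun n hn => ?_⟩
  have hn1 : (1 : ℝ) ≤ n := mod_cast Nat.one_le_iff_ne_zero.2 hn
  calc (tau m n : ℝ) ≤ (#n.divisors : ℝ) ^ m := mod_cast tau_le_card_divisors_pow m hn
    _ ≤ (D * (n : ℝ) ^ (ε / (m + 1))) ^ m := by gcongr; exact hdiv n hn
    _ = D ^ m * (n : ℝ) ^ (ε / (m + 1) * m) := by
      rw [mul_pow, ← Real.rpow_natCast ((n : ℝ) ^ _), ← Real.rpow_mul (by positivity)]
    _ ≤ D ^ m * (n : ℝ) ^ ε := by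
      gcongr
      rw [div_mul_eq_mul_div, div_le_iff₀ (by positivity)]
      nlinarith

theorem tau_le_rpow_of_forall_prime_dvd_le (m : ℕ) {q α : ℝ} (hq : 0 ≤ q) (hα : 0 ≤ α)
    (hm : (m : ℝ) ≤ q ^ α) {c : ℕ} (hc : c ≠ 0) (hrough : ∀ p : ℕ, p.Prime → p ∣ c → q ≤ p) :
    (tau m c : ℝ) ≤ (c : ℝ) ^ α := by
  induction c using induction_on_primes with
  | zero => exact absurd rfl hc
  | one => simp [tau_one_right]
  | prime_mul p a hp ih =>
    have hpα : (tau m p : ℝ) ≤ (p : ℝ) ^ α := by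
      rw [tau_prime m hp]
      exact hm.trans (Real.rpow_le_rpow hq (hrough p hp (dvd_mul_right p a)) hα)
    have haα : (tau m a : ℝ) ≤ (a : ℝ) ^ α :=
      ih (right_ne_zero_of_mul hc) fun r hr hra => hrough r hr (hra.mul_left p)
    calc (tau m (p * a) : ℝ) ≤ tau m p * tau m a := mod_cast tau_mul_le m p a
      _ ≤ (p : ℝ) ^ α * (a : ℝ) ^ α := by gcongr
      _ = ((p * a : ℕ) : ℝ) ^ α := by
        rw [Nat.cast_mul, Real.mul_rpow (by positivity) (by positivity)]

/-! ### A majorant supported on small divisors -/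

/-- The largest prime factor of `b`, or `0` if there is none. -/
def largestPrimeFactor (b : ℕ) : ℕ := b.primeFactors.sup id

theorem largestPrimeFactor_mem_primeFactors {b : ℕ} (hb : 2 ≤ b) :
    largestPrimeFactor b ∈ b.primeFactors := by
  obtain ⟨p, hp, hsup⟩ := exists_mem_eq_sup b.primeFactors (Nat.nonempty_primeFactors.2 hb) id
  rwa [largestPrimeFactor, hsup]

theorem le_largestPrimeFactor {b p : ℕ} (hb : b ≠ 0) (hp : p.Prime) (hpb : p ∣ b) :
    p ≤ largestPrimeFactor b :=
  le_sup (f := id) (Nat.mem_primeFactors.2 ⟨hp, hpb, hb⟩)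

theorem largestPrimeFactor_mul_prime {b q : ℕ} (hq : q.Prime) (hb : b ∈ (q + 1).smoothNumbers) :
    largestPrimeFactor (b * q) = q := by
  have hbq : b * q ≠ 0 := mul_ne_zero (Nat.ne_zero_of_mem_smoothNumbers hb) hq.ne_zero
  refine le_antisymm (Finset.sup_le fun p hp => ?_)
    (le_largestPrimeFactor hbq hq (dvd_mul_left q b))
  have hp' := Nat.prime_of_mem_primeFactors hp
  rcases hp'.dvd_mul.1 (Nat.dvd_of_mem_primeFactors hp) with hpb | hpq
  · exact Nat.lt_succ_iff.1 (Nat.mem_smoothNumbers'.1 hb p hp' hpb)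
  · exact Nat.le_of_dvd hq.pos hpq

theorem le_or_exists_eq_smooth_mul_prime_mul_rough {w : ℝ} (hw : 1 ≤ w) {n : ℕ} (hn : n ≠ 0) :
    (n : ℝ) ≤ w ∨ ∃ b q c : ℕ, n = b * q * c ∧ q.Prime ∧ (b : ℝ) ≤ w ∧ w < b * q ∧
      b ∈ (q + 1).smoothNumbers ∧ ∀ p : ℕ, p.Prime → p ∣ c → q ≤ p := by
  induction n using Nat.strong_induction_on with
  | _ n ih =>
    refine or_iff_not_imp_left.2 fun hnw => ?_
    rw [not_le] at hnw
    have hn2 : 2 ≤ n := mod_cast hw.trans_lt hnw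
    -- Strip off the largest prime factor `p`; it is `q` as soon as the cofactor is at most `w`.
    obtain ⟨p, a, rfl, hp, hmax⟩ : ∃ p a : ℕ, n = a * p ∧ p.Prime ∧
        ∀ r : ℕ, r.Prime → r ∣ n → r ≤ p := by
      have hmem := largestPrimeFactor_mem_primeFactors hn2
      obtain ⟨a, ha⟩ := Nat.dvd_of_mem_primeFactors hmem
      exact ⟨_, a, ha.trans (mul_comm _ _), Nat.prime_of_mem_primeFactors hmem,
        fun r hr hrn => le_largestPrimeFactor hn hr hrn⟩
    have ha0 : a ≠ 0 := left_ne_zero_of_mul hn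
    have halt : a < a * p := lt_mul_of_one_lt_right (Nat.pos_of_ne_zero ha0) hp.one_lt
    rcases ih a halt ha0 with haw | ⟨b, q, c, rfl, hq, hbw, hbq, hsmooth, hrough⟩
    · refine ⟨a, p, 1, (mul_one _).symm, hp, haw, by exact_mod_cast hnw, ?_,
        fun r hr hr1 => absurd (Nat.dvd_one.1 hr1) hr.ne_one⟩
      exact Nat.mem_smoothNumbers'.2 fun r hr hra =>
        Nat.lt_succ_iff.2 (hmax r hr (hra.mul_right p))
    · refine ⟨b, q, c * p, mul_assoc _ _ _, hq, hbw, hbq, hsmooth, fun r hr hrcp => ?_⟩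
      rcases hr.dvd_mul.1 hrcp with hrc | hrp
      · exact hrough r hr hrc
      · rw [(Nat.prime_dvd_prime_iff_eq hr hp).1 hrp]
        exact hmax q hq (((dvd_mul_left q b).mul_right c).mul_right p)

/-- The exponent attached to a prime `q` in the majorant of `tau m`. A number `c ≤ w ^ 8` without
prime factors below `q` has `tau m c ≤ c ^ (log m / log q)`, which gives the second term; the first
one keeps the exponent bounded for small `q` and comes from the divisor bound
`tau m c ≪ c ^ (1 / 16)`. -/
noncomputable def rankinExponent (m q : ℕ) : ℝ := min (1 / 2) (8 * Real.log m / Real.log q)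

theorem rankinExponent_nonneg (m q : ℕ) : 0 ≤ rankinExponent m q :=
  le_min (by norm_num) (div_nonneg (mul_nonneg (by norm_num) (Real.log_natCast_nonneg m))
    (Real.log_natCast_nonneg q))

theorem rankinExponent_mul_log_le (m : ℕ) {q : ℕ} (hq : 1 < q) :
    rankinExponent m q * Real.log q ≤ 8 * Real.log m :=
  (le_div_iff₀ (Real.log_pos (mod_cast hq))).1 (min_le_right _ _)

theorem rpow_rankinExponent_le (m : ℕ) {q : ℕ} (hq : 1 < q) {x : ℝ} (hx : 0 ≤ x) (hxq : x ≤ q) :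
    x ^ rankinExponent m q ≤ Real.exp (8 * Real.log m) :=
  calc x ^ rankinExponent m q ≤ (q : ℝ) ^ rankinExponent m q :=
        Real.rpow_le_rpow hx hxq (rankinExponent_nonneg m q)
    _ = Real.exp (rankinExponent m q * Real.log q) := by
        rw [Real.rpow_def_of_pos (mod_cast hq.pos), mul_comm]
    _ ≤ Real.exp (8 * Real.log m) := Real.exp_le_exp.2 (rankinExponent_mul_log_le m hq)

theorem exists_tau_le_rpow_rankinExponent (m : ℕ) :
    ∃ D > 0, ∀ w : ℝ, 1 ≤ w → ∀ q c : ℕ, 1 < q → c ≠ 0 → (c : ℝ) ≤ w ^ 8 →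
      (∀ p : ℕ, p.Prime → p ∣ c → q ≤ p) → (tau m c : ℝ) ≤ D * w ^ rankinExponent m q := by
  obtain ⟨D, hD, hdiv⟩ := exists_tau_le_rpow m (ε := 1 / 16) (by norm_num)
  refine ⟨D + 1, by positivity, fun w hw q c hq hc hcw hrough => ?_⟩
  have hw0 : 0 ≤ w := zero_le_one.trans hw
  have hpow : ∀ α : ℝ, 0 ≤ α → (c : ℝ) ^ α ≤ w ^ (8 * α) := fun α hα => by
    calc (c : ℝ) ^ α ≤ (w ^ 8) ^ α := by gcongr
      _ = w ^ (8 * α) := by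
        rw [← Real.rpow_natCast, ← Real.rpow_mul hw0]
        norm_num
  have hsmall : (tau m c : ℝ) ≤ D * w ^ (1 / 2 : ℝ) := by
    calc (tau m c : ℝ) ≤ D * (c : ℝ) ^ (1 / 16 : ℝ) := hdiv c hc
      _ ≤ D * w ^ (8 * (1 / 16) : ℝ) := by gcongr; exact hpow _ (by norm_num)
      _ = D * w ^ (1 / 2 : ℝ) := by norm_num
  have hlarge : (tau m c : ℝ) ≤ w ^ (8 * Real.log m / Real.log q) := by
    have hq1 : (1 : ℝ) < q := mod_cast hq
    have hα : 0 ≤ Real.log m / Real.log q :=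
      div_nonneg (Real.log_natCast_nonneg m) (Real.log_natCast_nonneg q)
    have hmq : (m : ℝ) ≤ (q : ℝ) ^ (Real.log m / Real.log q) := by
      obtain rfl | hm := m.eq_zero_or_pos
      · simp
      · exact (Real.rpow_logb (by positivity) hq1.ne' (mod_cast hm)).ge
    rw [mul_div_assoc]
    exact (tau_le_rpow_of_forall_prime_dvd_le m (by positivity) hα hmq hc
      fun p hp hpc => mod_cast hrough p hp hpc).trans (hpow _ hα)
  rcases min_choice (1 / 2) (8 * Real.log m / Real.log q) with h | h <;> rw [rankinExponent, h]
  · exact hsmall.trans (by gcongr; linarith)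
  · exact hlarge.trans (le_mul_of_one_le_left (by positivity) (by linarith))

theorem exists_tau_le_of_forall_prime_dvd_le (m : ℕ) :
    ∃ D > 0, ∀ w : ℝ, 1 ≤ w → ∀ q c : ℕ, 1 < q → w ≤ q → c ≠ 0 → (c : ℝ) ≤ w ^ 8 →
      (∀ p : ℕ, p.Prime → p ∣ c → q ≤ p) → (tau m c : ℝ) ≤ D := by
  obtain ⟨D, hD, htau⟩ := exists_tau_le_rpow_rankinExponent m
  refine ⟨D * Real.exp (8 * Real.log m), by positivity, fun w hw q c hq hwq hc hcw hrough => ?_⟩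
  refine (htau w hw q c hq hc hcw hrough).trans ?_
  gcongr
  exact rpow_rankinExponent_le m hq (zero_le_one.trans hw) hwq

/-- A weight whose sum over the small divisors of `n` dominates `tau m n`. -/
noncomputable def tauWeight (m b : ℕ) : ℝ :=
  tau m b * (b : ℝ) ^ rankinExponent m (largestPrimeFactor b)

theorem tauWeight_nonneg (m b : ℕ) : 0 ≤ tauWeight m b := by
  unfold tauWeight; positivity

theorem tau_le_tauWeight (m b : ℕ) : (tau m b : ℝ) ≤ tauWeight m b := by
  obtain rfl | hb := b.eq_zero_or_pos
  · simp [tauWeight, tau_zero_right]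
  · exact le_mul_of_one_le_right (by positivity) <|
      Real.one_le_rpow (mod_cast hb) (rankinExponent_nonneg _ _)

theorem exists_dvd_tau_le_mul_tauWeight (m : ℕ) :
    ∃ D > 0, ∀ w : ℝ, 1 ≤ w → ∀ n : ℕ, n ≠ 0 → (n : ℝ) ≤ w ^ 8 →
      ∃ b : ℕ, b ∣ n ∧ (b : ℝ) ≤ w ^ 2 ∧ (tau m n : ℝ) ≤ D * tauWeight m b := by
  obtain ⟨D, hD, htau_le⟩ := exists_tau_le_of_forall_prime_dvd_le m
  obtain ⟨E, hE, htau_le_rpow⟩ := exists_tau_le_rpow_rankinExponent m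
  refine ⟨1 + D + E, by positivity, fun w hw n hn hnw => ?_⟩
  have hww : w ≤ w ^ 2 := le_self_pow₀ hw two_ne_zero
  rcases le_or_exists_eq_smooth_mul_prime_mul_rough hw hn with
    hnw | ⟨b, q, c, rfl, hq, hbw, hbq, hsmooth, hrough⟩
  · exact ⟨n, dvd_rfl, hnw.trans hww, (tau_le_tauWeight m n).trans <|
      le_mul_of_one_le_left (tauWeight_nonneg m n) (by linarith)⟩
  have hle_of_dvd : ∀ d : ℕ, d ∣ b * q * c → (d : ℝ) ≤ w ^ 8 := fun d hd =>
    hnw.trans' <| mod_cast Nat.le_of_dvd (Nat.pos_of_ne_zero hn) hd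
  rcases le_or_gt w q with hwq | hqw
  · refine ⟨b, (dvd_mul_right b q).mul_right c, hbw.trans hww, ?_⟩
    rw [mul_assoc] at hn hle_of_dvd ⊢
    have hqc : (tau m (q * c) : ℝ) ≤ D := by
      refine htau_le w hw q _ hq.one_lt hwq (right_ne_zero_of_mul hn)
        (hle_of_dvd _ (dvd_mul_left _ b)) fun p hp hpqc => ?_
      rcases hp.dvd_mul.1 hpqc with hpq | hpc
      · exact ((Nat.prime_dvd_prime_iff_eq hp hq).1 hpq).ge
      · exact hrough p hp hpc
    calc (tau m (b * (q * c)) : ℝ) ≤ tau m (q * c) * tau m b := by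
          rw [mul_comm (tau m (q * c) : ℝ)]
          exact_mod_cast tau_mul_le m b (q * c)
      _ ≤ (1 + D + E) * tauWeight m b := by
          gcongr
          · linarith
          · exact tau_le_tauWeight m b
  · refine ⟨b * q, dvd_mul_right _ _, ?_, ?_⟩
    · rw [Nat.cast_mul, sq]
      gcongr
    have hc : (tau m c : ℝ) ≤ E * ((b * q : ℕ) : ℝ) ^ rankinExponent m q := by
      refine (htau_le_rpow w hw q c hq.one_lt (right_ne_zero_of_mul hn)
        (hle_of_dvd c (dvd_mul_left _ _)) hrough).trans ?_
      gcongr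
      · exact rankinExponent_nonneg m q
      · exact_mod_cast hbq.le
    calc (tau m (b * q * c) : ℝ) ≤ tau m (b * q) * tau m c := mod_cast tau_mul_le m (b * q) c
      _ ≤ tau m (b * q) * (E * ((b * q : ℕ) : ℝ) ^ rankinExponent m q) := by gcongr
      _ = E * tauWeight m (b * q) := by
          rw [tauWeight, largestPrimeFactor_mul_prime hq hsmooth]
          ring
      _ ≤ (1 + D + E) * tauWeight m (b * q) :=
          mul_le_mul_of_nonneg_right (by linarith) (tauWeight_nonneg m _)

theorem exists_tauInt_le_sum_tauWeight (m : ℕ) :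
    ∃ D > 0, ∀ w : ℝ, 1 ≤ w → ∀ t : ℤ, (t : ℝ) ≤ w ^ 8 →
      (tauInt m t : ℝ) ≤ D * ∑ b ∈ Icc 1 ⌊w ^ 2⌋₊ with ((b : ℕ) : ℤ) ∣ t, tauWeight m b := by
  obtain ⟨D, hD, hdvd⟩ := exists_dvd_tau_le_mul_tauWeight m
  refine ⟨D, hD, fun w hw t htw => ?_⟩
  have hnonneg : ∀ b ∈ {b ∈ Icc 1 ⌊w ^ 2⌋₊ | ((b : ℕ) : ℤ) ∣ t}, 0 ≤ tauWeight m b :=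
    fun b _ => tauWeight_nonneg m b
  rcases le_or_gt t 0 with ht | ht
  · rw [tauInt_eq_tau_toNat, Int.toNat_eq_zero.2 ht, tau_zero_right, Nat.cast_zero]
    exact mul_nonneg hD.le (sum_nonneg hnonneg)
  lift t to ℕ using ht.le
  have htn : t ≠ 0 := by omega
  obtain ⟨b, hbt, hbw, hb⟩ := hdvd w hw t htn (by exact_mod_cast htw)
  rw [tauInt_natCast]
  refine hb.trans (mul_le_mul_of_nonneg_left ?_ hD.le)
  refine single_le_sum hnonneg (mem_filter.2 ⟨mem_Icc.2 ⟨?_, Nat.le_floor hbw⟩, ?_⟩)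
  · exact Nat.pos_of_dvd_of_pos hbt (Nat.pos_of_ne_zero htn)
  · exact_mod_cast hbt

/-! ### Sums over smooth numbers -/

theorem prod_primesBelow_pow_div_dvd_factorial (k n : ℕ) :
    ∏ p ∈ k.primesBelow, p ^ (n / p) ∣ n.factorial := by
  refine Finset.prod_dvd_of_isRelPrime (fun p hp q hq hpq => ?_) fun p hp => ?_
  · exact Nat.coprime_iff_isRelPrime.1 <| Nat.Coprime.pow _ _ <| (Nat.coprime_primes
      (Nat.prime_of_mem_primesBelow hp) (Nat.prime_of_mem_primesBelow hq)).2 hpq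
  · rw [(Nat.prime_of_mem_primesBelow hp).pow_dvd_factorial_iff (b := Nat.log p n + 2) (by omega)]
    simpa using single_le_sum (f := fun i => n / p ^ i) (fun _ _ => Nat.zero_le _)
      (show 1 ∈ Ico 1 (Nat.log p n + 2) by simp)

theorem sum_primesBelow_div_mul_log_le (n : ℕ) :
    ∑ p ∈ (n + 1).primesBelow, ((n / p : ℕ) : ℝ) * Real.log p ≤ n * Real.log n := by
  have hprime : ∀ p ∈ (n + 1).primesBelow, p.Prime := fun _ => Nat.prime_of_mem_primesBelow
  have hle : ∏ p ∈ (n + 1).primesBelow, p ^ (n / p) ≤ n ^ n :=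
    (Nat.le_of_dvd n.factorial_pos (prod_primesBelow_pow_div_dvd_factorial (n + 1) n)).trans
      (Nat.factorial_le_pow n)
  have hlog := Real.log_le_log (mod_cast prod_pos fun p hp => pow_pos (hprime p hp).pos _)
    (Nat.cast_le (α := ℝ).2 hle)
  rw [Nat.cast_prod, Real.log_prod fun p hp => mod_cast pow_ne_zero _ (hprime p hp).ne_zero] at hlog
  simpa [Real.log_pow] using hlog

theorem natCast_div_le_two_mul_div {n p : ℕ} (hp : 0 < p) (hpn : p ≤ n) :
    (n : ℝ) / p ≤ 2 * ((n / p : ℕ) : ℝ) := by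
  have hquot : 1 ≤ n / p := (Nat.one_le_div_iff hp).2 hpn
  have hn : n ≤ 2 * (n / p) * p := by
    nlinarith [Nat.div_add_mod n p, Nat.mod_lt n hp]
  rw [div_le_iff₀ (by positivity)]
  exact_mod_cast hn

theorem sum_primesBelow_log_div_le {n : ℕ} (hn : n ≠ 0) :
    ∑ p ∈ (n + 1).primesBelow, Real.log p / p ≤ 2 * Real.log n := by
  have hn0 : (0 : ℝ) < n := mod_cast Nat.pos_of_ne_zero hn
  refine le_of_mul_le_mul_left ?_ hn0
  calc (n : ℝ) * ∑ p ∈ (n + 1).primesBelow, Real.log p / p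
      ≤ ∑ p ∈ (n + 1).primesBelow, 2 * (((n / p : ℕ) : ℝ) * Real.log p) := by
        rw [mul_sum]
        refine sum_le_sum fun p hp => ?_
        rw [mul_div_left_comm, mul_comm, ← mul_assoc]
        exact mul_le_mul_of_nonneg_right (natCast_div_le_two_mul_div
          (Nat.prime_of_mem_primesBelow hp).pos (Nat.lt_succ_iff.1 (Nat.lt_of_mem_primesBelow hp)))
          (Real.log_natCast_nonneg p)
    _ = 2 * ∑ p ∈ (n + 1).primesBelow, ((n / p : ℕ) : ℝ) * Real.log p := (mul_sum _ _ _).symm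
    _ ≤ n * (2 * Real.log n) := by linarith [sum_primesBelow_div_mul_log_le n]

/-- The completely multiplicative function `n ↦ n ^ s`, to which Mathlib's Euler product for
smooth numbers applies. -/
noncomputable def natRpowHom (s : ℝ) : ℕ →* ℝ where
  toFun n := (n : ℝ) ^ s
  map_one' := by simp
  map_mul' a b := by rw [Nat.cast_mul, Real.mul_rpow (by positivity) (by positivity)]

theorem natRpowHom_apply (s : ℝ) (n : ℕ) : natRpowHom s n = (n : ℝ) ^ s := rfl

theorem tsum_natCast_rpow_neg_le {s : ℝ} (hs : 1 < s) :
    ∑' n : ℕ, (n : ℝ) ^ (-s) ≤ 1 + 1 / (s - 1) := by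
  have hterm : ∀ n : ℕ, ((n + 1 : ℕ) : ℝ) ^ (-s) = 1 / ((n : ℝ) + 1) ^ s := fun n => by
    rw [Real.rpow_neg (by positivity), one_div, Nat.cast_add_one]
  have htail : 0 ≤ s * ZetaAsymptotics.termTSum s :=
    mul_nonneg (by linarith) (tsum_nonneg fun n => ZetaAsymptotics.term_nonneg _ _)
  rw [(Real.summable_nat_rpow.2 (by linarith)).tsum_eq_zero_add, Nat.cast_zero,
    Real.zero_rpow (by linarith), zero_add]
  simp_rw [hterm]
  linarith [ZetaAsymptotics.zeta_limit_aux1 hs]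

theorem prod_primesBelow_inv_one_sub_rpow_neg_le {s : ℝ} (hs : 1 < s) (N : ℕ) :
    ∏ p ∈ N.primesBelow, (1 - (p : ℝ) ^ (-s))⁻¹ ≤ 1 + 1 / (s - 1) := by
  have hsum : Summable fun n : ℕ => (n : ℝ) ^ (-s) := Real.summable_nat_rpow.2 (by linarith)
  have heuler := EulerProduct.prod_primesBelow_geometric_eq_tsum_smoothNumbers
    (f := natRpowHom (-s)) hsum N
  simp only [natRpowHom_apply] at heuler
  rw [heuler]
  exact (hsum.tsum_subtype_le _ _ fun n => by positivity).trans (tsum_natCast_rpow_neg_le hs)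

theorem sum_rpow_le_prod_primesBelow {s : ℝ} (hs : s < 0) {N : ℕ} {F : Finset ℕ}
    (hF : ∀ b ∈ F, b ∈ N.smoothNumbers) :
    ∑ b ∈ F, (b : ℝ) ^ s ≤ ∏ p ∈ N.primesBelow, (1 - (p : ℝ) ^ s)⁻¹ := by
  have hnorm : ∀ {p : ℕ}, p.Prime → ‖natRpowHom s p‖ < 1 := fun {p} hp => by
    rw [natRpowHom_apply, Real.norm_of_nonneg (by positivity)]
    exact Real.rpow_lt_one_of_one_lt_of_neg (mod_cast hp.one_lt) hs
  have hsum := (EulerProduct.summable_and_hasSum_smoothNumbers_prod_primesBelow_geometric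
    hnorm N).2
  simp only [natRpowHom_apply] at hsum
  rw [← sum_subtype_of_mem _ hF]
  exact sum_le_hasSum _ (fun b _ => by positivity) hsum

theorem exp_mul_sub_exp_neg_le {a x : ℝ} (ha : 0 ≤ a) (hx0 : 0 ≤ x) (hx1 : x ≤ 1) :
    Real.exp (a * x) - Real.exp (-x) ≤ (a * Real.exp a + 1) * x := by
  have hneg : 1 - x ≤ Real.exp (-x) := by linarith [Real.add_one_le_exp (-x)]
  have hpos : Real.exp (a * x) ≤ 1 + a * x * Real.exp (a * x) := by
    have hinv : Real.exp (-(a * x)) * Real.exp (a * x) = 1 := by rw [← Real.exp_add]; simp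
    nlinarith [Real.add_one_le_exp (-(a * x)), Real.exp_pos (a * x)]
  have hmono : a * x * Real.exp (a * x) ≤ a * x * Real.exp a := by
    gcongr
    exact mul_le_of_le_one_right ha hx1
  linarith

theorem rpow_sub_one_sub_rpow_le {A σ x y : ℝ} (hA : 0 ≤ A) (hx : 1 ≤ x) (hxy : x ≤ y)
    (hy : 1 < y) (hσ : σ * Real.log y ≤ A) :
    x ^ (σ - 1) - x ^ (-(1 + 1 / Real.log y)) ≤
      (A * Real.exp A + 1) / Real.log y * (Real.log x / x) := by
  have hx0 : 0 < x := by linarith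
  have hlx : 0 ≤ Real.log x := Real.log_nonneg hx
  have hly : 0 < Real.log y := Real.log_pos hy
  have hpos : x ^ σ ≤ Real.exp (A * (Real.log x / Real.log y)) := by
    rw [Real.rpow_def_of_pos hx0]
    refine Real.exp_le_exp.2 ?_
    calc Real.log x * σ = σ * Real.log y * (Real.log x / Real.log y) := by field_simp
      _ ≤ A * (Real.log x / Real.log y) := by gcongr
  have hneg : x ^ (-(1 / Real.log y)) = Real.exp (-(Real.log x / Real.log y)) := by
    rw [Real.rpow_def_of_pos hx0]
    ring_nf
  have hexp := exp_mul_sub_exp_neg_le hA (div_nonneg hlx hly.le)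
    (div_le_one_of_le₀ (Real.log_le_log hx0 hxy) hly.le)
  rw [show -(1 + 1 / Real.log y) = -(1 / Real.log y) - 1 by ring, Real.rpow_sub_one hx0.ne',
    Real.rpow_sub_one hx0.ne', ← sub_div, hneg, mul_div_assoc']
  gcongr
  calc x ^ σ - Real.exp (-(Real.log x / Real.log y))
      ≤ (A * Real.exp A + 1) * (Real.log x / Real.log y) := by linarith
    _ = (A * Real.exp A + 1) / Real.log y * Real.log x := by ring

theorem inv_one_sub_le_mul_exp {x y : ℝ} (hxy : x ≤ y) (hy : y ≤ 3 / 4) :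
    (1 - y)⁻¹ ≤ (1 - x)⁻¹ * Real.exp (4 * (y - x)) := by
  have hexp := Real.add_one_le_exp (4 * (y - x))
  rw [← div_eq_inv_mul, inv_eq_one_div, div_le_div_iff₀ (by linarith) (by linarith)]
  nlinarith

theorem rpow_le_three_fourths {x s : ℝ} (hx : 2 ≤ x) (hs : s ≤ -(1 / 2)) : x ^ s ≤ 3 / 4 := by
  calc x ^ s ≤ x ^ (-(1 / 2) : ℝ) := Real.rpow_le_rpow_of_exponent_le (by linarith) hs
    _ = (√x)⁻¹ := by rw [Real.rpow_neg (by linarith), ← Real.sqrt_eq_rpow]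
    _ ≤ 3 / 4 := by
      refine inv_le_of_inv_le₀ (by norm_num) (Real.le_sqrt_of_sq_le ?_)
      norm_num
      linarith

-- The Euler factor at `1 - σ` is compared with the one at a real point just to the right of `1`.
theorem inv_one_sub_rpow_le_mul_exp {A σ x y : ℝ} (hA : 0 ≤ A) (hx : 2 ≤ x) (hxy : x ≤ y)
    (hσ0 : 0 ≤ σ) (hσ : σ ≤ 1 / 2) (hσA : σ * Real.log y ≤ A) :
    (1 - x ^ (σ - 1))⁻¹ ≤ (1 - x ^ (-(1 + 1 / Real.log y)))⁻¹ *
      Real.exp (4 * ((A * Real.exp A + 1) / Real.log y * (Real.log x / x))) := by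
  have hy : 1 < y := by linarith
  have hly : 0 < 1 / Real.log y := one_div_pos.2 (Real.log_pos hy)
  have hle : x ^ (-(1 + 1 / Real.log y)) ≤ x ^ (σ - 1) :=
    Real.rpow_le_rpow_of_exponent_le (by linarith) (by linarith)
  have hσx : x ^ (σ - 1) ≤ 3 / 4 := rpow_le_three_fourths hx (by linarith)
  refine (inv_one_sub_le_mul_exp hle hσx).trans ?_
  gcongr
  · exact inv_nonneg.2 (by linarith)
  · exact rpow_sub_one_sub_rpow_le hA (by linarith) hxy hy hσA

theorem prod_primesBelow_inv_one_sub_rpow_le {A σ : ℝ} {q : ℕ} (hA : 0 ≤ A) (hq : 1 < q)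
    (hσ0 : 0 ≤ σ) (hσ : σ ≤ 1 / 2) (hσA : σ * Real.log q ≤ A) :
    ∏ p ∈ (q + 1).primesBelow, (1 - (p : ℝ) ^ (σ - 1))⁻¹ ≤
      (1 + Real.log q) * Real.exp (8 * (A * Real.exp A + 1)) := by
  have hlq : 0 < Real.log q := Real.log_pos (mod_cast hq)
  set s : ℝ := 1 + 1 / Real.log q
  set K : ℝ := (A * Real.exp A + 1) / Real.log q
  have hzeta := prod_primesBelow_inv_one_sub_rpow_neg_le
    (lt_add_of_pos_right 1 (one_div_pos.2 hlq)) (q + 1)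
  rw [add_sub_cancel_left, one_div_one_div] at hzeta
  calc ∏ p ∈ (q + 1).primesBelow, (1 - (p : ℝ) ^ (σ - 1))⁻¹
      ≤ ∏ p ∈ (q + 1).primesBelow,
          ((1 - (p : ℝ) ^ (-s))⁻¹ * Real.exp (4 * (K * (Real.log p / p)))) := by
        refine prod_le_prod (fun p hp => inv_nonneg.2 (sub_nonneg.2 ?_)) fun p hp => ?_
        · exact Real.rpow_le_one_of_one_le_of_nonpos
            (mod_cast (Nat.prime_of_mem_primesBelow hp).one_le) (by linarith)
        · exact inv_one_sub_rpow_le_mul_exp hA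
            (mod_cast (Nat.prime_of_mem_primesBelow hp).two_le)
            (mod_cast Nat.lt_succ_iff.1 (Nat.lt_of_mem_primesBelow hp)) hσ0 hσ hσA
    _ = (∏ p ∈ (q + 1).primesBelow, (1 - (p : ℝ) ^ (-s))⁻¹) *
          Real.exp (4 * (K * ∑ p ∈ (q + 1).primesBelow, Real.log p / p)) := by
        rw [prod_mul_distrib, ← Real.exp_sum, ← mul_sum, ← mul_sum]
    _ ≤ (1 + Real.log q) * Real.exp (4 * (K * (2 * Real.log q))) := by
        gcongr
        exact sum_primesBelow_log_div_le (by omega)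
    _ = (1 + Real.log q) * Real.exp (8 * (A * Real.exp A + 1)) := by
        simp only [K]
        field_simp
        ring_nf

theorem exists_sum_smoothNumbers_rpow_le {A : ℝ} (hA : 0 ≤ A) :
    ∃ B > 0, ∀ (q : ℕ) (σ : ℝ), 1 < q → 0 ≤ σ → σ ≤ 1 / 2 → σ * Real.log q ≤ A →
      ∀ F : Finset ℕ, (∀ b ∈ F, b ∈ (q + 1).smoothNumbers) →
        ∑ b ∈ F, (b : ℝ) ^ (σ - 1) ≤ B * (1 + Real.log q) := by
  refine ⟨Real.exp (8 * (A * Real.exp A + 1)), Real.exp_pos _, fun q σ hq hσ0 hσ hσA F hF => ?_⟩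
  rw [mul_comm]
  exact (sum_rpow_le_prod_primesBelow (by linarith) hF).trans
    (prod_primesBelow_inv_one_sub_rpow_le hA hq hσ0 hσ hσA)

/-! ### The mean value of the majorant -/

theorem sum_tau_mul_rpow_le (m : ℕ) (s : ℝ) {F : Finset ℕ} (hF : ∀ b ∈ F, ∀ d, d ∣ b → d ∈ F) :
    ∑ b ∈ F, (tau m b : ℝ) * (b : ℝ) ^ s ≤ (∑ b ∈ F, (b : ℝ) ^ s) ^ m := by
  induction m with
  | zero =>
    simp only [tau_zero_left, pow_zero, Nat.cast_ite, Nat.cast_one, Nat.cast_zero, ite_mul,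
      zero_mul, sum_ite_eq', one_mul, Real.one_rpow]
    split_ifs <;> norm_num
  | succ m ih =>
    calc ∑ b ∈ F, (tau (m + 1) b : ℝ) * (b : ℝ) ^ s
        = ∑ b ∈ F, ∑ x ∈ b.divisorsAntidiagonal,
            (tau m x.1 : ℝ) * (x.1 : ℝ) ^ s * (x.2 : ℝ) ^ s := by
          refine sum_congr rfl fun b _ => ?_
          rw [tau_succ, Nat.cast_sum, sum_mul,
            ← Nat.sum_divisorsAntidiagonal (fun d _ => (tau m d : ℝ) * (b : ℝ) ^ s)]
          refine sum_congr rfl fun x hx => ?_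
          rw [← (Nat.mem_divisorsAntidiagonal.1 hx).1, Nat.cast_mul,
            Real.mul_rpow (by positivity) (by positivity), mul_assoc]
      _ = ∑ x ∈ F.biUnion Nat.divisorsAntidiagonal,
            (tau m x.1 : ℝ) * (x.1 : ℝ) ^ s * (x.2 : ℝ) ^ s := by
          refine (sum_biUnion fun a _ b _ hab => disjoint_left.2 fun x hxa hxb => hab ?_).symm
          rw [← (Nat.mem_divisorsAntidiagonal.1 hxa).1, (Nat.mem_divisorsAntidiagonal.1 hxb).1]
      _ ≤ ∑ x ∈ F ×ˢ F, (tau m x.1 : ℝ) * (x.1 : ℝ) ^ s * (x.2 : ℝ) ^ s := by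
          refine sum_le_sum_of_subset_of_nonneg (fun x hx => ?_) fun _ _ _ => by positivity
          obtain ⟨b, hb, hx⟩ := mem_biUnion.1 hx
          obtain ⟨rfl, -⟩ := Nat.mem_divisorsAntidiagonal.1 hx
          exact mem_product.2 ⟨hF _ hb _ (dvd_mul_right _ _), hF _ hb _ (dvd_mul_left _ _)⟩
      _ = (∑ b ∈ F, (tau m b : ℝ) * (b : ℝ) ^ s) * ∑ b ∈ F, (b : ℝ) ^ s := by
          rw [sum_mul_sum, sum_product]
      _ ≤ (∑ b ∈ F, (b : ℝ) ^ s) ^ (m + 1) := by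
          rw [pow_succ]
          gcongr

theorem filter_largestPrimeFactor_eq_subset_image (Z : ℕ) {q : ℕ} (hq : q.Prime) :
    {b ∈ Icc 2 Z | largestPrimeFactor b = q} ⊆
      (Nat.smoothNumbersUpTo Z (q + 1)).image (q * ·) := by
  intro b hb
  obtain ⟨hbZ, rfl⟩ := mem_filter.1 hb
  rw [mem_Icc] at hbZ
  have hb0 : b ≠ 0 := by omega
  obtain ⟨c, hc⟩ :=
    Nat.dvd_of_mem_primeFactors (largestPrimeFactor_mem_primeFactors hbZ.1)
  have hcb : c ∣ b := Dvd.intro_left _ hc.symm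
  refine mem_image.2 ⟨c, Nat.mem_smoothNumbersUpTo.2 ⟨?_, ?_⟩, hc.symm⟩
  · exact (Nat.le_of_dvd (Nat.pos_of_ne_zero hb0) hcb).trans hbZ.2
  · exact Nat.mem_smoothNumbers'.2 fun p hp hpc =>
      Nat.lt_succ_iff.2 (le_largestPrimeFactor hb0 hp (hpc.trans hcb))

theorem tau_prime_mul_mul_rpow_le (m c : ℕ) {q : ℕ} (hq : q.Prime) :
    (tau m (q * c) : ℝ) * ((q * c : ℕ) : ℝ) ^ (rankinExponent m q - 1) ≤
      m * Real.exp (8 * Real.log m) / q * (tau m c * (c : ℝ) ^ (rankinExponent m q - 1)) := by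
  have htau : (tau m (q * c) : ℝ) ≤ m * tau m c := by
    exact_mod_cast tau_prime m hq ▸ tau_mul_le m q c
  have hqpow : (q : ℝ) ^ (rankinExponent m q - 1) ≤ Real.exp (8 * Real.log m) / q := by
    rw [Real.rpow_sub_one (mod_cast hq.ne_zero)]
    gcongr
    exact rpow_rankinExponent_le m hq.one_lt (by positivity) le_rfl
  rw [Nat.cast_mul, Real.mul_rpow (by positivity) (by positivity)]
  calc (tau m (q * c) : ℝ) *
        ((q : ℝ) ^ (rankinExponent m q - 1) * (c : ℝ) ^ (rankinExponent m q - 1))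
      ≤ (m * tau m c) *
          (Real.exp (8 * Real.log m) / q * (c : ℝ) ^ (rankinExponent m q - 1)) := by gcongr
    _ = _ := by ring

theorem exists_sum_tauWeight_div_le_of_largestPrimeFactor_eq (m : ℕ) :
    ∃ C > 0, ∀ Z q : ℕ, q.Prime →
      ∑ b ∈ Icc 2 Z with largestPrimeFactor b = q, tauWeight m b / b ≤
        C * (1 + Real.log q) ^ m / q := by
  obtain ⟨B, hB, hsmooth⟩ := exists_sum_smoothNumbers_rpow_le (A := 8 * Real.log m)
    (mul_nonneg (by norm_num) (Real.log_natCast_nonneg m))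
  refine ⟨(m + 1) * Real.exp (8 * Real.log m) * B ^ m, by positivity, fun Z q hq => ?_⟩
  set σ := rankinExponent m q
  set F := Nat.smoothNumbersUpTo Z (q + 1)
  have hFdvd : ∀ b ∈ F, ∀ d, d ∣ b → d ∈ F := fun b hb d hd => by
    obtain ⟨hbZ, hbq⟩ := Nat.mem_smoothNumbersUpTo.1 hb
    have hb0 := Nat.pos_of_ne_zero (Nat.ne_zero_of_mem_smoothNumbers hbq)
    exact Nat.mem_smoothNumbersUpTo.2
      ⟨(Nat.le_of_dvd hb0 hd).trans hbZ, Nat.mem_smoothNumbers_of_dvd hbq hd⟩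
  have hFsum : ∑ c ∈ F, (c : ℝ) ^ (σ - 1) ≤ B * (1 + Real.log q) :=
    hsmooth q σ hq.one_lt (rankinExponent_nonneg m q) (min_le_left _ _)
      (rankinExponent_mul_log_le m hq.one_lt) F fun b hb => (Nat.mem_smoothNumbersUpTo.1 hb).2
  calc ∑ b ∈ Icc 2 Z with largestPrimeFactor b = q, tauWeight m b / b
      = ∑ b ∈ Icc 2 Z with largestPrimeFactor b = q, (tau m b : ℝ) * (b : ℝ) ^ (σ - 1) := by
        refine sum_congr rfl fun b hb => ?_
        obtain ⟨hbZ, hbq⟩ := mem_filter.1 hb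
        have hb0 : b ≠ 0 := by have := (mem_Icc.1 hbZ).1; omega
        rw [tauWeight, hbq, Real.rpow_sub_one (mod_cast hb0), mul_div_assoc]
    _ ≤ ∑ b ∈ F.image (q * ·), (tau m b : ℝ) * (b : ℝ) ^ (σ - 1) :=
        sum_le_sum_of_subset_of_nonneg (filter_largestPrimeFactor_eq_subset_image Z hq)
          fun _ _ _ => by positivity
    _ = ∑ c ∈ F, (tau m (q * c) : ℝ) * ((q * c : ℕ) : ℝ) ^ (σ - 1) :=
        sum_image fun a _ b _ hab => Nat.eq_of_mul_eq_mul_left hq.pos hab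
    _ ≤ m * Real.exp (8 * Real.log m) / q * ∑ c ∈ F, (tau m c : ℝ) * (c : ℝ) ^ (σ - 1) := by
        rw [mul_sum]
        exact sum_le_sum fun c _ => tau_prime_mul_mul_rpow_le m c hq
    _ ≤ (m + 1) * Real.exp (8 * Real.log m) / q * (B * (1 + Real.log q)) ^ m := by
        gcongr
        · linarith
        · exact (sum_tau_mul_rpow_le m _ hFdvd).trans (by gcongr)
    _ = (m + 1) * Real.exp (8 * Real.log m) * B ^ m * (1 + Real.log q) ^ m / q := by
        rw [mul_pow]
        ring

theorem sum_Icc_inv_le_one_add_log (n : ℕ) : ∑ q ∈ Icc 1 n, (q : ℝ)⁻¹ ≤ 1 + Real.log n := by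
  simpa [harmonic_eq_sum_Icc] using harmonic_le_one_add_log n

theorem exists_sum_tauWeight_div_le (m : ℕ) :
    ∃ C > 0, ∀ Z : ℕ, 1 ≤ Z →
      ∑ b ∈ Icc 1 Z, tauWeight m b / b ≤ C * (1 + Real.log Z) ^ (m + 1) := by
  obtain ⟨C, hC, hfiber⟩ := exists_sum_tauWeight_div_le_of_largestPrimeFactor_eq m
  refine ⟨1 + C, by positivity, fun Z hZ => ?_⟩
  have hL : 0 ≤ Real.log Z := Real.log_natCast_nonneg Z
  have hmaps : ∀ b ∈ Icc 2 Z, largestPrimeFactor b ∈ {q ∈ Icc 1 Z | q.Prime} := fun b hb => by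
    rw [mem_Icc] at hb
    have hmem := largestPrimeFactor_mem_primeFactors hb.1
    have hprime := Nat.prime_of_mem_primeFactors hmem
    exact mem_filter.2
      ⟨mem_Icc.2 ⟨hprime.one_le, (Nat.le_of_mem_primeFactors hmem).trans hb.2⟩, hprime⟩
  have htail : ∑ b ∈ Icc 2 Z, tauWeight m b / b ≤ C * (1 + Real.log Z) ^ (m + 1) := by
    calc ∑ b ∈ Icc 2 Z, tauWeight m b / b
        = ∑ q ∈ Icc 1 Z with q.Prime, ∑ b ∈ Icc 2 Z with largestPrimeFactor b = q,
            tauWeight m b / b := (sum_fiberwise_of_maps_to hmaps _).symm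
      _ ≤ ∑ q ∈ Icc 1 Z with q.Prime, C * (1 + Real.log Z) ^ m * (q : ℝ)⁻¹ := by
          refine sum_le_sum fun q hq => (hfiber Z q (mem_filter.1 hq).2).trans ?_
          have hqZ := mem_Icc.1 (mem_filter.1 hq).1
          have hq0 : (0 : ℝ) < q := mod_cast hqZ.1
          have := Real.log_natCast_nonneg q
          rw [div_eq_mul_inv]
          gcongr
          exact hqZ.2
      _ ≤ ∑ q ∈ Icc 1 Z, C * (1 + Real.log Z) ^ m * (q : ℝ)⁻¹ :=
          sum_le_sum_of_subset_of_nonneg (filter_subset _ _) fun _ _ _ => by positivity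
      _ ≤ C * (1 + Real.log Z) ^ m * (1 + Real.log Z) := by
          rw [← mul_sum]
          gcongr
          exact sum_Icc_inv_le_one_add_log Z
      _ = C * (1 + Real.log Z) ^ (m + 1) := by ring
  have hhead : tauWeight m 1 / (1 : ℕ) ≤ (1 + Real.log Z) ^ (m + 1) := by
    simpa [tauWeight, tau_one_right] using one_le_pow₀ (n := m + 1) (le_add_of_nonneg_right hL)
  rw [← insert_Icc_succ_left_eq_Icc hZ, sum_insert (by simp)]
  exact (add_le_add hhead htail).trans_eq (by ring)

/-! ### The additive divisor sum -/

theorem card_le_div_add_one_of_modEq {N L : ℕ} {S : Finset ℕ} (hS : ∀ a ∈ S, a ≤ N)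
    (hmod : ∀ a ∈ S, ∀ b ∈ S, a ≡ b [MOD L]) : #S ≤ N / L + 1 := by
  rw [← card_range (N / L + 1)]
  refine card_le_card_of_injOn (· / L) (fun a ha => ?_) fun a ha b hb hdiv => ?_
  · exact mem_coe.2 <| mem_range.2 <| Nat.lt_succ_iff.2 <| Nat.div_le_div_right (hS a ha)
  · have hab : a % L = b % L := hmod a ha b hb
    rw [← Nat.div_add_mod a L, ← Nat.div_add_mod b L, hab, show a / L = b / L from hdiv]

theorem sum_card_filter_mul_le {X Y g L : ℕ} {P : ℕ → ℕ → Prop} [∀ x y, Decidable (P x y)]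
    (hdvd : ∀ x y, P x y → g ∣ x) (hmod : ∀ x y y', P x y → P x y' → y ≡ y' [MOD L])
    (hL : L ≤ 2 * Y) :
    (∑ x ∈ Icc 1 X, #{y ∈ Icc 1 Y | P x y}) * (g * L) ≤ 3 * (X * Y) := by
  have hfiber : ∀ x, #{y ∈ Icc 1 Y | P x y} ≤ if g ∣ x then Y / L + 1 else 0 := fun x => by
    split_ifs with hx
    · refine card_le_div_add_one_of_modEq (fun y hy => ?_) fun y hy y' hy' => ?_
      · exact (mem_Icc.1 (mem_filter.1 hy).1).2
      · exact hmod x y y' (mem_filter.1 hy).2 (mem_filter.1 hy').2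
    · rw [filter_false_of_mem fun y _ hy => hx (hdvd x y hy), card_empty]
  have hcount : ∑ x ∈ Icc 1 X, #{y ∈ Icc 1 Y | P x y} ≤ X / g * (Y / L + 1) := by
    calc ∑ x ∈ Icc 1 X, #{y ∈ Icc 1 Y | P x y}
        ≤ ∑ x ∈ Icc 1 X, if g ∣ x then Y / L + 1 else 0 := sum_le_sum fun x _ => hfiber x
      _ = #{x ∈ Icc 1 X | g ∣ x} * (Y / L + 1) := by rw [← sum_filter, sum_const, smul_eq_mul]
      _ = X / g * (Y / L + 1) := by rw [← Nat.Ioc_filter_dvd_card_eq_div X g]; rfl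
  calc (∑ x ∈ Icc 1 X, #{y ∈ Icc 1 Y | P x y}) * (g * L)
      ≤ X / g * (Y / L + 1) * (g * L) := Nat.mul_le_mul_right _ hcount
    _ = (X / g * g) * (Y / L * L + L) := by ring
    _ ≤ X * (Y + 2 * Y) := by
      gcongr
      · exact Nat.div_mul_le_self X g
      · exact Nat.div_mul_le_self Y L
    _ = 3 * (X * Y) := by ring

-- The longer of the two variables carries the congruence: its modulus is at most twice its range.
theorem sum_card_filter_dvd_mul_le {V N b d : ℕ} {ε : ℤ} (hε : IsUnit ε) (hb : 0 < b)
    (hbd : b * d ≤ 2 * max N V) :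
    (∑ v ∈ Icc 1 V, #{n ∈ Icc 1 N | ((b : ℤ) ∣ (n : ℕ)) ∧ (d : ℤ) ∣ ε * v + (n : ℕ)}) * (b * d) ≤
      3 * (V * N) := by
  rcases le_total V N with hVN | hNV
  · rw [max_eq_left hVN, ← Nat.gcd_mul_lcm b d] at hbd
    have hgcd : 0 < b.gcd d := Nat.gcd_pos_of_pos_left _ hb
    rw [← Nat.gcd_mul_lcm b d]
    refine sum_card_filter_mul_le (fun v n ⟨hbn, hdn⟩ => ?_)
      (fun v n n' ⟨hbn, hdn⟩ ⟨hbn', hdn'⟩ => ?_) (by nlinarith)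
    · have hgn : ((b.gcd d : ℕ) : ℤ) ∣ n :=
        (Int.natCast_dvd_natCast.2 (Nat.gcd_dvd_left b d)).trans hbn
      have hgvn : ((b.gcd d : ℕ) : ℤ) ∣ ε * v + n :=
        (Int.natCast_dvd_natCast.2 (Nat.gcd_dvd_right b d)).trans hdn
      exact Int.natCast_dvd_natCast.1 (hε.dvd_mul_left.1 ((dvd_add_left hgn).1 hgvn))
    · have hbdiff : (b : ℤ) ∣ n' - n := dvd_sub hbn' hbn
      have hddiff : (d : ℤ) ∣ n' - n := by simpa using dvd_sub hdn' hdn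
      rw [Nat.modEq_iff_dvd, Int.natCast_dvd]
      exact Nat.lcm_dvd (Int.natCast_dvd.1 hbdiff) (Int.natCast_dvd.1 hddiff)
  · rw [max_eq_right hNV] at hbd
    have hswap := sum_card_bipartiteAbove_eq_sum_card_bipartiteBelow (s := Icc 1 V) (t := Icc 1 N)
      fun v n : ℕ => (b : ℤ) ∣ n ∧ (d : ℤ) ∣ ε * v + n
    simp only [bipartiteAbove, bipartiteBelow] at hswap
    rw [hswap, mul_comm V]
    refine sum_card_filter_mul_le (P := fun n v : ℕ => (b : ℤ) ∣ n ∧ (d : ℤ) ∣ ε * v + n)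
      (fun n v ⟨hbn, _⟩ => Int.natCast_dvd_natCast.1 hbn)
      (fun n v v' ⟨_, hdn⟩ ⟨_, hdn'⟩ => ?_) (by nlinarith)
    have hddiff : (d : ℤ) ∣ ε * (v' - v) := by simpa [mul_sub] using dvd_sub hdn' hdn
    exact Nat.modEq_iff_dvd.2 (hε.dvd_mul_left.1 hddiff)

theorem sum_mul_sum_filter_dvd_le {V N Z : ℕ} {ε : ℤ} {f g : ℕ → ℝ} (hε : IsUnit ε)
    (hf : ∀ b, 0 ≤ f b) (hg : ∀ d, 0 ≤ g d) (hZ : Z * Z ≤ 2 * max N V) :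
    ∑ v ∈ Icc 1 V, ∑ n ∈ Icc 1 N,
        (∑ b ∈ Icc 1 Z with ((b : ℕ) : ℤ) ∣ n, f b) *
          (∑ d ∈ Icc 1 Z with ((d : ℕ) : ℤ) ∣ ε * v + n, g d) ≤
      3 * (V * N) * ((∑ b ∈ Icc 1 Z, f b / b) * ∑ d ∈ Icc 1 Z, g d / d) := by
  have hterm : ∀ b ∈ Icc 1 Z, ∀ d ∈ Icc 1 Z,
      ∑ v ∈ Icc 1 V, ∑ n ∈ Icc 1 N, (if ((b : ℤ) ∣ n ∧ (d : ℤ) ∣ ε * v + n) then f b * g d else 0) ≤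
        3 * (V * N) * (f b / b * (g d / d)) := fun b hb d hd => by
    rw [mem_Icc] at hb hd
    have hcard := sum_card_filter_dvd_mul_le (V := V) (N := N) hε hb.1
      ((Nat.mul_le_mul hb.2 hd.2).trans hZ)
    have hb0 : (0 : ℝ) < b := mod_cast hb.1
    have hd0 : (0 : ℝ) < d := mod_cast hd.1
    simp only [← sum_filter, sum_const, nsmul_eq_mul, ← sum_mul]
    rw [div_mul_div_comm, ← mul_div_assoc, le_div_iff₀ (by positivity), mul_right_comm]
    exact mul_le_mul_of_nonneg_right (mod_cast hcard) (mul_nonneg (hf b) (hg d))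
  calc _ = ∑ v ∈ Icc 1 V, ∑ n ∈ Icc 1 N, ∑ b ∈ Icc 1 Z, ∑ d ∈ Icc 1 Z,
          (if ((b : ℤ) ∣ n ∧ (d : ℤ) ∣ ε * v + n) then f b * g d else 0) := by
        simp only [sum_filter, sum_mul_sum, ite_and, ite_zero_mul_ite_zero]
    _ = ∑ b ∈ Icc 1 Z, ∑ d ∈ Icc 1 Z, ∑ v ∈ Icc 1 V, ∑ n ∈ Icc 1 N,
          (if ((b : ℤ) ∣ n ∧ (d : ℤ) ∣ ε * v + n) then f b * g d else 0) := by
        rw [← sum_product', sum_comm]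
        refine sum_congr rfl fun b _ => ?_
        rw [sum_comm]
        simp only [sum_product]
    _ ≤ ∑ b ∈ Icc 1 Z, ∑ d ∈ Icc 1 Z, 3 * (V * N) * (f b / b * (g d / d)) :=
        sum_le_sum fun b hb => sum_le_sum fun d hd => hterm b hb d hd
    _ = 3 * (V * N) * ((∑ b ∈ Icc 1 Z, f b / b) * ∑ d ∈ Icc 1 Z, g d / d) := by
        simp_rw [sum_mul_sum, mul_sum]

theorem exists_tauInt_mul_tauInt_le (m l : ℕ) :
    ∃ D > 0, ∀ w : ℝ, 1 ≤ w → ∀ s t : ℤ, (s : ℝ) ≤ w ^ 8 → (t : ℝ) ≤ w ^ 8 →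
      (tauInt m s : ℝ) * tauInt l t ≤
        D * ((∑ b ∈ Icc 1 ⌊w ^ 2⌋₊ with ((b : ℕ) : ℤ) ∣ s, tauWeight m b) *
          ∑ d ∈ Icc 1 ⌊w ^ 2⌋₊ with ((d : ℕ) : ℤ) ∣ t, tauWeight l d) := by
  obtain ⟨D₁, hD₁, htau₁⟩ := exists_tauInt_le_sum_tauWeight m
  obtain ⟨D₂, hD₂, htau₂⟩ := exists_tauInt_le_sum_tauWeight l
  refine ⟨D₁ * D₂, by positivity, fun w hw s t hs ht => ?_⟩
  rw [← mul_mul_mul_comm]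
  exact mul_le_mul (htau₁ w hw s hs) (htau₂ w hw t ht) (Nat.cast_nonneg _)
    ((Nat.cast_nonneg _).trans (htau₁ w hw s hs))

theorem natFloor_sq_mul_self_le_pow_eight {w : ℝ} (hw : 1 ≤ w) :
    (⌊w ^ 2⌋₊ : ℝ) * ⌊w ^ 2⌋₊ ≤ w ^ 8 := by
  have hfloor : (⌊w ^ 2⌋₊ : ℝ) ≤ w ^ 2 := Nat.floor_le (by positivity)
  calc (⌊w ^ 2⌋₊ : ℝ) * ⌊w ^ 2⌋₊ ≤ w ^ 2 * w ^ 2 := by gcongr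
    _ = w ^ 4 := by ring
    _ ≤ w ^ 8 := pow_le_pow_right₀ hw (by norm_num)

theorem exists_sum_tauInt_mul_tauInt_le_log_floor (m l : ℕ) :
    ∃ C > 0, ∀ V N : ℕ, ∀ w : ℝ, 1 ≤ w → w ^ 8 = (2 * max N V : ℕ) → ∀ ε : ℤ, IsUnit ε →
      ∑ v ∈ Icc 1 V, ∑ n ∈ Icc 1 N, (tauInt m n : ℝ) * tauInt l (ε * v + n) ≤
        C * (V * N) * (1 + Real.log ⌊w ^ 2⌋₊) ^ (m + l + 2) := by
  obtain ⟨D, hD, htau⟩ := exists_tauInt_mul_tauInt_le m l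
  obtain ⟨C₁, hC₁, hweight₁⟩ := exists_sum_tauWeight_div_le m
  obtain ⟨C₂, hC₂, hweight₂⟩ := exists_sum_tauWeight_div_le l
  refine ⟨D * (3 * (C₁ * C₂)), by positivity, fun V N w hw hwVN ε hε => ?_⟩
  set Z : ℕ := ⌊w ^ 2⌋₊
  have hZ : 1 ≤ Z := (Nat.one_le_floor_iff _).2 (one_le_pow₀ hw)
  have hZZ : Z * Z ≤ 2 * max N V := mod_cast (natFloor_sq_mul_self_le_pow_eight hw).trans_eq hwVN
  have hrange : ∀ v ∈ Icc 1 V, ∀ n ∈ Icc 1 N,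
      ((n : ℤ) : ℝ) ≤ w ^ 8 ∧ ((ε * v + n : ℤ) : ℝ) ≤ w ^ 8 := fun v hv n hn => by
    rw [mem_Icc] at hv hn
    rw [hwVN, ← Int.cast_natCast (2 * max N V), Int.cast_le, Int.cast_le]
    rcases Int.isUnit_iff.1 hε with rfl | rfl <;> constructor <;> omega
  have hweight_nonneg : 0 ≤ ∑ d ∈ Icc 1 Z, tauWeight l d / d :=
    sum_nonneg fun d _ => div_nonneg (tauWeight_nonneg l d) (Nat.cast_nonneg d)
  have : 0 ≤ 1 + Real.log Z := add_nonneg zero_le_one (Real.log_natCast_nonneg Z)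
  calc _ ≤ ∑ v ∈ Icc 1 V, ∑ n ∈ Icc 1 N,
          D * ((∑ b ∈ Icc 1 Z with ((b : ℕ) : ℤ) ∣ n, tauWeight m b) *
            ∑ d ∈ Icc 1 Z with ((d : ℕ) : ℤ) ∣ ε * v + n, tauWeight l d) := by
        refine sum_le_sum fun v hv => sum_le_sum fun n hn => ?_
        obtain ⟨hnw, hvnw⟩ := hrange v hv n hn
        exact htau w hw n _ hnw hvnw
    _ ≤ D * (3 * (V * N) *
          ((∑ b ∈ Icc 1 Z, tauWeight m b / b) * ∑ d ∈ Icc 1 Z, tauWeight l d / d)) := by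
        simp_rw [← mul_sum]
        gcongr
        exact sum_mul_sum_filter_dvd_le hε (tauWeight_nonneg m) (tauWeight_nonneg l) hZZ
    _ ≤ D * (3 * (V * N) *
          ((C₁ * (1 + Real.log Z) ^ (m + 1)) * (C₂ * (1 + Real.log Z) ^ (l + 1)))) := by
        gcongr
        · exact hweight₁ Z hZ
        · exact hweight₂ Z hZ
    _ = D * (3 * (C₁ * C₂)) * (V * N) * (1 + Real.log Z) ^ (m + l + 2) := by ring

theorem exists_sum_tauInt_mul_tauInt_le (m l : ℕ) :
    ∃ C > 0, ∀ V N : ℕ, 1 ≤ V → 1 ≤ N → ∀ ε : ℤ, IsUnit ε →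
      ∑ v ∈ Icc 1 V, ∑ n ∈ Icc 1 N, (tauInt m n : ℝ) * tauInt l (ε * v + n) ≤
        C * (V * N) * (1 + Real.log (V * N)) ^ (m + l + 2) := by
  obtain ⟨C, hC, hsum⟩ := exists_sum_tauInt_mul_tauInt_le_log_floor m l
  refine ⟨C, hC, fun V N hV hN ε hε => ?_⟩
  set Q : ℕ := 2 * max N V
  have hQ : 1 ≤ Q := by omega
  have hQVN : Q ≤ 2 * (V * N) :=
    Nat.mul_le_mul_left 2 (max_le (Nat.le_mul_of_pos_left N hV) (Nat.le_mul_of_pos_right V hN))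
  obtain ⟨w, hw, hwQ⟩ : ∃ w : ℝ, 1 ≤ w ∧ w ^ 8 = Q :=
    ⟨(Q : ℝ) ^ (8 : ℝ)⁻¹, Real.one_le_rpow (mod_cast hQ) (by norm_num),
      mod_cast Real.rpow_inv_natCast_pow (n := 8) Q.cast_nonneg (by norm_num)⟩
  set Z : ℕ := ⌊w ^ 2⌋₊
  have hZ : 1 ≤ Z := (Nat.one_le_floor_iff _).2 (one_le_pow₀ hw)
  have hZZ : Z * Z ≤ Q := mod_cast (natFloor_sq_mul_self_le_pow_eight hw).trans_eq hwQ
  have hZVN : (Z : ℝ) ≤ V * N := mod_cast (by nlinarith : Z ≤ V * N)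
  have : 0 ≤ Real.log Z := Real.log_natCast_nonneg Z
  refine (hsum V N w hw hwQ ε hε).trans ?_
  gcongr

theorem one_add_log_two_pow_mul_le (j : ℕ) {x : ℝ} (hx : 1 ≤ x) :
    1 + Real.log (2 ^ j * x) ≤ (1 + j) * (1 + Real.log x) := by
  have hlogx := Real.log_nonneg hx
  have hlog2 : Real.log 2 ≤ 1 := by linarith [Real.log_two_lt_d9]
  have hj : (0 : ℝ) ≤ j := j.cast_nonneg
  rw [Real.log_mul (by positivity) (by positivity), Real.log_pow]
  nlinarith [mul_nonneg hj hlogx]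

theorem sum_piFinset_prod_tauInt_mul_le {j : ℕ} (κ U : Fin j → ℕ) {F : ℕ → ℝ}
    (hF : ∀ n, 0 ≤ F n) :
    ∑ u ∈ Fintype.piFinset (fun i => Ico (U i) (2 * U i)),
        (∏ i, (tauInt (κ i) (u i) : ℝ)) * F (∏ i, u i) ≤
      ∑ n ∈ Icc 1 (2 ^ j * ∏ i, U i), (tauInt (∑ i, κ i) n : ℝ) * F n := by
  simp only [tauInt_natCast]
  have hprod : ∀ u ∈ Fintype.piFinset (fun i => Ico (U i) (2 * U i)),
      ∏ i, u i ∈ Icc 1 (2 ^ j * ∏ i, U i) := fun u hu => by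
    have hui : ∀ i, U i ≤ u i ∧ u i < 2 * U i := fun i =>
      mem_Ico.1 (Fintype.mem_piFinset.1 hu i)
    refine mem_Icc.2 ⟨one_le_prod' fun i _ => by have := hui i; omega, ?_⟩
    calc ∏ i, u i ≤ ∏ i, 2 * U i := prod_le_prod' fun i _ => (hui i).2.le
      _ = 2 ^ j * ∏ i, U i := by simp [prod_mul_distrib]
  rw [← sum_fiberwise_of_maps_to hprod]
  refine sum_le_sum fun n hn => ?_
  rw [← sum_finMulAntidiag_prod_tau, Nat.cast_sum, sum_mul]
  calc _ = ∑ u ∈ Fintype.piFinset (fun i => Ico (U i) (2 * U i)) with ∏ i, u i = n,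
          ((∏ i, tau (κ i) (u i) : ℕ) : ℝ) * F n :=
        sum_congr rfl fun u hu => by rw [(mem_filter.1 hu).2, Nat.cast_prod]
    _ ≤ _ := sum_le_sum_of_subset_of_nonneg
        (fun u hu => Nat.mem_finMulAntidiag.2 ⟨(mem_filter.1 hu).2, by grind⟩)
        fun u _ _ => mul_nonneg (Nat.cast_nonneg _) (hF n)

theorem stmt11_general {j : ℕ} (κ : Fin j → ℕ) (l : ℕ) :
    ∃ C : ℝ, 0 < C ∧ ∀ (V₁ : ℕ) (U : Fin j → ℕ), 1 ≤ V₁ → (∀ i, 1 ≤ U i) →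
      ∀ ε₁ : ℤ, (ε₁ = 1 ∨ ε₁ = -1) →
      (∑ v₁ ∈ Icc 1 V₁, ∑ u ∈ Fintype.piFinset (fun i => Ico (U i) (2 * U i)),
          (∏ i, (tauInt (κ i) (u i : ℤ) : ℝ)) *
            (tauInt l (ε₁ * (v₁ : ℤ) + ∏ i, (u i : ℤ)) : ℝ))
        ≤ C * (((V₁ * ∏ i, U i : ℕ) : ℝ) *
            (1 + Real.log ((V₁ * ∏ i, U i : ℕ) : ℝ)) ^ (∑ i, κ i + l + 2)) := by
  obtain ⟨C, hC, hsum⟩ := exists_sum_tauInt_mul_tauInt_le (∑ i, κ i) l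
  refine ⟨C * 2 ^ j * (1 + j) ^ (∑ i, κ i + l + 2), by positivity, fun V₁ U hV hU ε₁ hε => ?_⟩
  set X : ℕ := ∏ i, U i
  have hX : 1 ≤ X := one_le_prod' fun i _ => hU i
  have hVX : (1 : ℝ) ≤ V₁ * X := mod_cast Nat.mul_pos hV hX
  have hlog : 0 ≤ Real.log (2 ^ j * (V₁ * X)) :=
    Real.log_nonneg (one_le_mul_of_one_le_of_one_le (one_le_pow₀ one_le_two) hVX)
  calc _ ≤ ∑ v₁ ∈ Icc 1 V₁, ∑ n ∈ Icc 1 (2 ^ j * X),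
          (tauInt (∑ i, κ i) n : ℝ) * tauInt l (ε₁ * v₁ + n) :=
        sum_le_sum fun v₁ _ => by
          simpa only [Nat.cast_prod] using sum_piFinset_prod_tauInt_mul_le κ U
            (F := fun n => tauInt l (ε₁ * v₁ + n)) fun n => Nat.cast_nonneg _
    _ ≤ C * (V₁ * (2 ^ j * X : ℕ)) * (1 + Real.log (V₁ * (2 ^ j * X : ℕ))) ^ (∑ i, κ i + l + 2) :=
        hsum V₁ _ hV (Nat.mul_pos (by positivity) hX) ε₁ (Int.isUnit_iff.2 hε)
    _ = C * (2 ^ j * (V₁ * X)) * (1 + Real.log (2 ^ j * (V₁ * X))) ^ (∑ i, κ i + l + 2) := by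
        rw [Nat.cast_mul, Nat.cast_pow, Nat.cast_ofNat, mul_left_comm (V₁ : ℝ)]
    _ ≤ C * (2 ^ j * (V₁ * X)) * ((1 + j) * (1 + Real.log (V₁ * X))) ^ (∑ i, κ i + l + 2) := by
        gcongr
        exact one_add_log_two_pow_mul_le j hVX
    _ = _ := by
        rw [mul_pow]
        push_cast
        ring

end

/-- for every `k ≥ 2` there is `C_k > 0` such that for all integers
`V₁, U₂, …, U_k ≥ 1` (here `U i = U_{i+2}`, indexed by `i : Fin (k-1)`) and every
sign `ε₁ ∈ {−1, 1}`:
`∑ τ_k(u₂)⋯τ_k(u_k)·τ_k(ε₁v₁ + u₂⋯u_k) ≤ C_k · L_k(V₁U₂⋯U_k)`,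
the sum over `1 ≤ v₁ ≤ V₁` and `U_i ≤ u_i < 2U_i`, where
`L_k(r) = r·(1 + log r)^{k²+2}`. -/
theorem stmt11 (k : ℕ) (hk : 2 ≤ k) :
    ∃ C : ℝ, 0 < C ∧ ∀ (V₁ : ℕ) (U : Fin (k - 1) → ℕ), 1 ≤ V₁ → (∀ i, 1 ≤ U i) →
      ∀ ε₁ : ℤ, (ε₁ = 1 ∨ ε₁ = -1) →
      (∑ v₁ ∈ Finset.Icc 1 V₁,
        ∑ u ∈ Fintype.piFinset (fun i : Fin (k - 1) => Finset.Ico (U i) (2 * U i)),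
          (∏ i, (tauInt k (u i : ℤ) : ℝ)) *
            (tauInt k (ε₁ * (v₁ : ℤ) + ∏ i, (u i : ℤ)) : ℝ))
        ≤ C * (((V₁ * ∏ i, U i : ℕ) : ℝ) *
            (1 + Real.log ((V₁ * ∏ i, U i : ℕ) : ℝ)) ^ (k ^ 2 + 2)) := by
  have hexp : (k - 1) * k + k + 2 = k ^ 2 + 2 := by
    rw [← Nat.succ_mul, Nat.succ_eq_add_one, Nat.sub_add_cancel (by omega), sq]
  simpa [hexp] using stmt11_general (fun _ : Fin (k - 1) => k) k
end

section
/- For every integer k ≥ 1 there exist a constant C_k > 0 and a threshold x₀(k) such that for all integers x ≥ x₀(k) and H with x^{1 − 1/(50k)} ≤ H ≤ x, the number N_k(x, H) of nontrivial solutions satisfies N_k(x, H) ≤ C_k · H^k · (H/x) · (1 + log x)^{2k²+2}, where log denotes the natural logarithm. -/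
/-- `N_k(x, H)`: the number of nontrivial solutions
`(n₁,…,n_{2k}) ∈ ((x, x+H] ∩ ℤ)^{2k}` of `n₁⋯n_k = n_{k+1}⋯n_{2k}`, where a solution
is trivial iff the multiset `{n₁,…,n_k}` equals the multiset `{n_{k+1},…,n_{2k}}`.
Here `p.1 i = n_i` and `p.2 i = n_{k+i}`. -/
noncomputable def NkCount (k x H : ℕ) : ℕ :=
  Nat.card {p : (Fin k → ℕ) × (Fin k → ℕ) //
    (∀ i, p.1 i ∈ Finset.Ioc x (x + H)) ∧ (∀ i, p.2 i ∈ Finset.Ioc x (x + H)) ∧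
    (∏ i, p.1 i) = (∏ i, p.2 i) ∧
    Multiset.map p.1 Finset.univ.val ≠ Multiset.map p.2 Finset.univ.val}

/-!
Two factorizations `n₁⋯n_k = n_{k+1}⋯n_{2k}` of the same integer have a common refinement: a matrix
of positive integers with row products `nᵢ` and column products `n_{k+j}`. All these products
exceed `x`, so every row and every column has an entry that is at least `x ^ (1 / k) ≥ x / H`.

Choose one large entry `(i, σ i)` in each row and replace it by `1`. A large entry times its
cofactor lies in `(x, x + H]`, which leaves `O(H / cofactor)` values for it. Hence the matrices with
given `σ` number at most `(3H) ^ k` times the sum, over the cleared matrices, of the reciprocal of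
the product of the entries. Without further constraints this sum is a power of `log x`, and a factor
`H / x` is gained as follows.

* If `σ` misses some column, that column still has its product in `(x, x + H]` and a large entry.
  Given the other entries, the sum of the reciprocals of the possible values of this entry is
  `O(H / x)`.
* If `σ` is a permutation, then for some `i` the cofactors `r` and `c` of the entry `(i, σ i)` in
  its row and in its column differ, since the solution is nontrivial. Their ratio is `1 + O(H / x)`,
  so `r` leaves only `O(r * H / x)` choices for `c`. The numbers of factorizations of `r` and of `c`
  are decoupled by `2 * u * v ≤ u ^ 2 + v ^ 2`, and the second moment that results is again bounded
  by refining two factorizations of `r` to a matrix.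
-/

open Finset Function

section Refinement

variable {ι κ M : Type*}

lemma exists_prod_eq_of_dvd_prod [CommMonoid M] [DecompositionMonoid M] [Subsingleton Mˣ]
    {s : Finset κ} {b : κ → M} {a : M} (h : a ∣ ∏ j ∈ s, b j) :
    ∃ d : κ → M, ∏ j ∈ s, d j = a ∧ ∀ j ∈ s, d j ∣ b j := by
  classical
  induction s using Finset.induction_on generalizing a with
  | empty => exact ⟨1, by simpa using (isUnit_iff_eq_one.mp (isUnit_of_dvd_one h)).symm, by simp⟩
  | insert j s hj ih =>
    rw [prod_insert hj] at h
    obtain ⟨a₁, a₂, h₁, h₂, rfl⟩ := exists_dvd_and_dvd_of_dvd_mul h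
    obtain ⟨d, rfl, hd⟩ := ih h₂
    refine ⟨update d j a₁, by rw [prod_insert hj, update_self, prod_update_of_notMem hj], ?_⟩
    rw [forall_mem_insert, update_self]
    exact ⟨h₁, fun l hl => by rw [update_of_ne (ne_of_mem_of_not_mem hl hj)]; exact hd l hl⟩

lemma exists_matrix_of_prod_eq_prod [CommMonoidWithZero M] [IsCancelMulZero M]
    [DecompositionMonoid M] [Subsingleton Mˣ] {s : Finset ι} {t : Finset κ} {a : ι → M} {b : κ → M}
    (ha : ∀ i ∈ s, a i ≠ 0) (h : ∏ i ∈ s, a i = ∏ j ∈ t, b j) :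
    ∃ g : ι → κ → M, (∀ i ∈ s, ∏ j ∈ t, g i j = a i) ∧ ∀ j ∈ t, ∏ i ∈ s, g i j = b j := by
  classical
  induction s using Finset.induction_on generalizing b with
  | empty =>
    refine ⟨1, by simp, fun j hj => ?_⟩
    have hb : b j ∣ 1 := by simpa [← h] using dvd_prod_of_mem b hj
    simpa using (isUnit_iff_eq_one.mp (isUnit_of_dvd_one hb)).symm
  | insert i s hi ih =>
    rw [forall_mem_insert] at ha
    rw [prod_insert hi] at h
    obtain ⟨d, hd, hdb⟩ := exists_prod_eq_of_dvd_prod (h ▸ dvd_mul_right (a i) _)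
    choose! c hc using hdb
    have hac : ∏ l ∈ s, a l = ∏ j ∈ t, c j := by
      refine mul_left_cancel₀ ha.1 ?_
      rw [h, prod_congr rfl hc, prod_mul_distrib, hd]
    obtain ⟨g, hrow, hcol⟩ := ih ha.2 hac
    have hg : ∀ l ∈ s, update g i d l = g l := fun l hl =>
      update_of_ne (ne_of_mem_of_not_mem hl hi) _ _
    refine ⟨update g i d, ?_, fun j hj => ?_⟩
    · rw [forall_mem_insert, update_self]
      exact ⟨hd, fun l hl => by rw [hg l hl, hrow l hl]⟩
    · rw [prod_insert hi, update_self, prod_congr rfl fun l hl => by rw [hg l hl], hcol j hj,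
        hc j hj]

end Refinement

section Counting

variable {x H : ℕ}

lemma card_mul_le_of_mul_mem_Ioc {m : ℕ} (V : Finset ℕ)
    (hV : ∀ u ∈ V, u * m ∈ Ioc x (x + H) ∧ x ≤ u * H) (hH : H ≤ x) :
    #V * m ≤ 3 * H := by
  rcases V.eq_empty_or_nonempty with rfl | ⟨u, hu⟩
  · simp
  obtain ⟨hum, huH⟩ := hV u hu
  rw [mem_Ioc] at hum
  have hm : 0 < m := Nat.pos_of_ne_zero (by rintro rfl; simp at hum)
  have hu : 0 < u := Nat.pos_of_ne_zero (by rintro rfl; simp at hum)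
  have hmH : m ≤ 2 * H := by
    refine Nat.le_of_mul_le_mul_left ?_ hu
    linarith
  have hsub : V ⊆ Ioc (x / m) ((x + H) / m) := fun v hv => by
    have := mem_Ioc.mp (hV v hv).1
    rwa [mem_Ioc, Nat.div_lt_iff_lt_mul hm, Nat.le_div_iff_mul_le hm]
  have hcard : #V ≤ H / m + 1 := by
    refine (card_le_card hsub).trans ?_
    rw [Nat.card_Ioc, tsub_le_iff_left, Nat.add_div hm]
    split_ifs <;> linarith
  calc #V * m ≤ (H / m + 1) * m := Nat.mul_le_mul_right m hcard
    _ = H / m * m + m := by ring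
    _ ≤ H + 2 * H := Nat.add_le_add (Nat.div_mul_le_self H m) hmH
    _ = 3 * H := by ring

lemma sum_inv_le_of_mul_mem_Ioc (hx : 0 < x) {m : ℕ} (V : Finset ℕ)
    (hV : ∀ u ∈ V, u * m ∈ Ioc x (x + H) ∧ x ≤ u * H) (hH : H ≤ x) :
    ∑ u ∈ V, (u : ℝ)⁻¹ ≤ 3 * (H / x) := by
  have hx' : (0 : ℝ) < x := mod_cast hx
  have hinv : ∀ u ∈ V, (u : ℝ)⁻¹ ≤ m / x := fun u hu => by
    have hum := (mem_Ioc.mp (hV u hu).1).1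
    have hu : 0 < u := Nat.pos_of_ne_zero (by rintro rfl; simp at hum)
    rw [inv_le_iff_one_le_mul₀' (by positivity), mul_div_assoc', one_le_div₀ hx']
    exact_mod_cast hum.le
  calc ∑ u ∈ V, (u : ℝ)⁻¹ ≤ #V * (m / x) := by
        simpa using sum_le_card_nsmul V _ _ hinv
    _ = (#V * m : ℕ) / x := by push_cast; ring
    _ ≤ (3 * H : ℕ) / x :=
        div_le_div_of_nonneg_right (mod_cast card_mul_le_of_mul_mem_Ioc V hV hH) hx'.le
    _ = 3 * (H / x) := by push_cast; ring

/-- Two distinct integers whose ratio lies between `x / (x + H)` and `(x + H) / x`, as do the two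
cofactors of a common factor of two distinct integers in `(x, x + H]`. -/
abbrev ClosePair (x H r c : ℕ) : Prop :=
  r ≠ c ∧ x * r ≤ (x + H) * c ∧ x * c ≤ (x + H) * r

lemma closePair_comm {r c : ℕ} : ClosePair x H r c ↔ ClosePair x H c r := by
  unfold ClosePair
  tauto

lemma closePair_of_mul_mem_Ioc {m r c : ℕ} (hr : m * r ∈ Ioc x (x + H))
    (hc : m * c ∈ Ioc x (x + H)) (hne : r ≠ c) : ClosePair x H r c := by
  rw [mem_Ioc] at hr hc
  have hm : 0 < m := Nat.pos_of_ne_zero (by rintro rfl; simp at hr)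
  have cross {r c : ℕ} (hr : m * r ≤ x + H) (hc : x < m * c) : x * r ≤ (x + H) * c := by
    refine Nat.le_of_mul_le_mul_left ?_ hm
    calc m * (x * r) = x * (m * r) := by ring
      _ ≤ (m * c) * (x + H) := Nat.mul_le_mul hc.le hr
      _ = m * ((x + H) * c) := by ring
  exact ⟨hne, cross hr.2 hc.1, cross hc.2 hr.1⟩

lemma card_filter_closePair_mul_le (hx : 0 < x) {r : ℕ} (Q : Finset ℕ) :
    #{c ∈ Q | ClosePair x H r c} * x ≤ 2 * (H * r) := by
  obtain ⟨D, hD⟩ : ∃ D, D = H * r / x := ⟨_, rfl⟩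
  have near {u v : ℕ} (huv : x * u ≤ (x + H) * v) (hv : v ≤ r ∨ u ≤ r) : u ≤ v + D := by
    rcases le_total u v with h | h
    · exact h.trans (Nat.le_add_right v D)
    have hvr : H * v ≤ H * r := Nat.mul_le_mul_left H (by omega)
    rw [← Nat.sub_le_iff_le_add', hD, Nat.le_div_iff_mul_le hx, Nat.sub_mul]
    apply Nat.sub_le_of_le_add
    linarith
  have hsub : {c ∈ Q | ClosePair x H r c} ⊆ (Icc (r - D) (r + D)).erase r := fun c hc => by
    obtain ⟨hne, hrc, hcr⟩ := (mem_filter.mp hc).2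
    have := near hrc (.inr le_rfl)
    have := near hcr (.inl le_rfl)
    rw [mem_erase, mem_Icc]
    omega
  have hcard : #{c ∈ Q | ClosePair x H r c} ≤ 2 * D := by
    have := card_le_card hsub
    rw [card_erase_of_mem (by rw [mem_Icc]; omega), Nat.card_Icc] at this
    omega
  calc #{c ∈ Q | ClosePair x H r c} * x ≤ 2 * D * x := Nat.mul_le_mul_right x hcard
    _ = 2 * (H * r / x * x) := by rw [hD]; ring
    _ ≤ 2 * (H * r) := Nat.mul_le_mul_left 2 (Nat.div_mul_le_self _ _)

lemma sum_inv_closePair_le (hx : 0 < x) (hH : H ≤ x) {r : ℕ} (hr : 0 < r) (Q : Finset ℕ) :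
    ∑ c ∈ Q with ClosePair x H r c, (c : ℝ)⁻¹ ≤ 4 * (H / x) := by
  have : (0 : ℝ) < r := mod_cast hr
  have : (0 : ℝ) < x := mod_cast hx
  have hinv : ∀ c ∈ Q.filter (ClosePair x H r), (c : ℝ)⁻¹ ≤ 2 / r := fun c hc => by
    have hrc : r ≤ 2 * c := by
      refine Nat.le_of_mul_le_mul_left ?_ hx
      linarith [(mem_filter.mp hc).2.2.1, Nat.mul_le_mul_right c hH]
    have hc : 0 < c := by omega
    rw [inv_le_comm₀ (by positivity) (by positivity), inv_div, div_le_iff₀' two_pos]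
    exact_mod_cast hrc
  calc ∑ c ∈ Q with ClosePair x H r c, (c : ℝ)⁻¹
      ≤ #{c ∈ Q | ClosePair x H r c} * (2 / r) := by
        simpa using sum_le_card_nsmul _ _ _ hinv
    _ = (#{c ∈ Q | ClosePair x H r c} * x : ℕ) * (2 / (r * x)) := by push_cast; field_simp
    _ ≤ (2 * (H * r) : ℕ) * (2 / (r * x)) :=
        mul_le_mul_of_nonneg_right (mod_cast card_filter_closePair_mul_le hx Q) (by positivity)
    _ = 4 * (H / x) := by push_cast; field_simp; ring

lemma exists_le_mul_of_lt_prod {ι : Type*} [Fintype ι] (hx : 0 < x)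
    (hxH : x ^ Fintype.card ι ≤ x * H ^ Fintype.card ι) {a : ι → ℕ} (ha : x < ∏ i, a i) :
    ∃ i, x ≤ a i * H := by
  by_contra! hlt
  have hpos : 0 < H ^ Fintype.card ι :=
    Nat.pos_of_mul_pos_left ((pow_pos hx _).trans_le hxH)
  have hle : (∏ i, a i) * H ^ Fintype.card ι ≤ x * H ^ Fintype.card ι :=
    calc (∏ i, a i) * H ^ Fintype.card ι = ∏ i, a i * H := by
          rw [prod_mul_distrib, prod_const, card_univ]
      _ ≤ x ^ Fintype.card ι := by simpa using prod_le_pow_card univ _ x fun i _ => (hlt i).le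
      _ ≤ x * H ^ Fintype.card ι := hxH
  exact ha.not_ge (Nat.le_of_mul_le_mul_right hle hpos)

end Counting

lemma sum_le_card_mul_of_forall_exists {α ι : Type*} [Fintype ι] {s : Finset α} {f : α → ℝ}
    (hf : ∀ a, 0 ≤ f a) {p : ι → α → Prop} [∀ i, DecidablePred (p i)] {C : ℝ}
    (hp : ∀ a ∈ s, ∃ i, p i a) (hC : ∀ i, ∑ a ∈ s with p i a, f a ≤ C) :
    ∑ a ∈ s, f a ≤ Fintype.card ι * C := by
  have hle : ∀ a ∈ s, f a ≤ ∑ i, if p i a then f a else 0 := fun a ha => by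
    obtain ⟨i, hi⟩ := hp a ha
    have hnonneg (j) : 0 ≤ if p j a then f a else 0 := ite_nonneg (hf a) le_rfl
    simpa only [if_pos hi] using single_le_sum (fun j _ => hnonneg j) (mem_univ i)
  calc ∑ a ∈ s, f a ≤ ∑ a ∈ s, ∑ i, if p i a then f a else 0 := sum_le_sum hle
    _ = ∑ i, ∑ a ∈ s with p i a, f a := by simp only [sum_comm (s := s), sum_filter]
    _ ≤ Fintype.card ι * C := by simpa using sum_le_card_nsmul univ _ C fun i _ => hC i

lemma sum_sum_mul_mul_le_of_symm {β : Type*} (s : Finset β) (f : β → ℝ) {K : β → β → ℝ}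
    (hK : ∀ r c, 0 ≤ K r c) (hKsymm : ∀ r c, K r c = K c r) :
    ∑ r ∈ s, ∑ c ∈ s, f r * f c * K r c ≤ ∑ r ∈ s, f r ^ 2 * ∑ c ∈ s, K r c := by
  calc ∑ r ∈ s, ∑ c ∈ s, f r * f c * K r c
      ≤ ∑ r ∈ s, ∑ c ∈ s, (f r ^ 2 * K r c / 2 + f c ^ 2 * K c r / 2) := by
        refine sum_le_sum fun r _ => sum_le_sum fun c _ => ?_
        rw [hKsymm c r]
        linarith [mul_nonneg (sq_nonneg (f r - f c)) (hK r c)]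
    _ = ∑ r ∈ s, ∑ c ∈ s, f r ^ 2 * K r c := by
        simp only [sum_add_distrib]
        rw [sum_comm (f := fun r c => f c ^ 2 * K c r / 2)]
        simp only [← sum_add_distrib, add_halves]
    _ = ∑ r ∈ s, f r ^ 2 * ∑ c ∈ s, K r c := by simp only [mul_sum]

section Tuples

variable {α : Type*} [Fintype α] {X : ℕ}

/-- The tuples indexed by `α` with entries in `[1, X]`; for `α = ι × κ` these are matrices. -/
def tupleBox (α : Type*) [Fintype α] [DecidableEq α] (X : ℕ) : Finset (α → ℕ) :=
  Fintype.piFinset fun _ => Icc 1 X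

/-- The reciprocal of the product of the entries of a tuple, the weight with which tuples and
matrices are counted. -/
noncomputable def recipProd (a : α → ℕ) : ℝ := ((∏ i, a i : ℕ) : ℝ)⁻¹

lemma recipProd_nonneg (a : α → ℕ) : 0 ≤ recipProd a := inv_nonneg.mpr (Nat.cast_nonneg _)

lemma sum_inv_Icc_eq_harmonic (X : ℕ) : ∑ n ∈ Icc 1 X, (n : ℝ)⁻¹ = harmonic X := by
  rw [harmonic_eq_sum_Icc]
  push_cast
  rfl

lemma one_le_harmonic (hX : 1 ≤ X) : 1 ≤ (harmonic X : ℝ) := by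
  rw [← sum_inv_Icc_eq_harmonic]
  simpa using single_le_sum (f := fun n : ℕ => (n : ℝ)⁻¹) (fun _ _ => by positivity)
    (left_mem_Icc.mpr hX)

lemma harmonic_nonneg (X : ℕ) : 0 ≤ (harmonic X : ℝ) := by
  rw [← sum_inv_Icc_eq_harmonic]
  positivity

variable [DecidableEq α]

lemma mem_tupleBox {a : α → ℕ} : a ∈ tupleBox α X ↔ ∀ i, 1 ≤ a i ∧ a i ≤ X := by
  simp only [tupleBox, Fintype.mem_piFinset, mem_Icc]

lemma sum_recipProd_tupleBox (α : Type*) [Fintype α] [DecidableEq α] (X : ℕ) :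
    ∑ a ∈ tupleBox α X, recipProd a = (harmonic X : ℝ) ^ Fintype.card α := by
  simp only [recipProd, Nat.cast_prod, ← prod_inv_distrib, tupleBox]
  rw [sum_prod_piFinset (Icc 1 X) fun (_ : α) n => (n : ℝ)⁻¹, prod_const, card_univ,
    sum_inv_Icc_eq_harmonic]

lemma update_one_mem_tupleBox {a : α → ℕ} (ha : a ∈ tupleBox α X) (p : α) :
    update a p 1 ∈ tupleBox α X := by
  rw [mem_tupleBox] at ha ⊢
  intro q
  have := ha p
  have := ha q
  rw [update_apply]
  split_ifs <;> omega

lemma prod_eq_mul_prod_update_one {M : Type*} [CommMonoid M] (f : α → M) (p : α) :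
    ∏ q, f q = f p * ∏ q, update f p 1 q := by
  rw [prod_update_of_mem (mem_univ p), one_mul, ← erase_eq, mul_prod_erase univ f (mem_univ p)]

lemma recipProd_eq_inv_mul_update (a : α → ℕ) (p : α) :
    recipProd a = (a p : ℝ)⁻¹ * recipProd (update a p 1) := by
  rw [recipProd, recipProd, prod_eq_mul_prod_update_one a p, Nat.cast_mul, mul_inv]

lemma sum_recipProd_le_of_mul_mem_Ioc {x H : ℕ} (hx : 0 < x) (hH : H ≤ x) (p : α)
    (cofactor : (α → ℕ) → ℕ) {A : Finset (α → ℕ)} (hA : A ⊆ tupleBox α X)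
    (hmem : ∀ a ∈ A, a p * cofactor (update a p 1) ∈ Ioc x (x + H)) (hbig : ∀ a ∈ A, x ≤ a p * H) :
    ∑ a ∈ A, recipProd a ≤ 3 * (H / x) * (harmonic X : ℝ) ^ Fintype.card α := by
  rw [← sum_fiberwise_of_maps_to fun a ha => update_one_mem_tupleBox (hA ha) p,
    ← sum_recipProd_tupleBox, mul_sum]
  refine sum_le_sum fun c _ => ?_
  set F := {a ∈ A | update a p 1 = c}
  have hF {a} (ha : a ∈ F) : a ∈ A ∧ update a p 1 = c := mem_filter.mp ha
  have hinj : Set.InjOn (fun a : α → ℕ => a p) F := fun a ha a' ha' (h : a p = a' p) => by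
    rw [← update_eq_self p a, ← update_eq_self p a', ← update_idem (1 : ℕ), (hF ha).2, h,
      ← (hF ha').2, update_idem]
  let V : Finset ℕ := F.image fun a => a p
  have hV : ∑ u ∈ V, (u : ℝ)⁻¹ ≤ 3 * (H / x) :=
    sum_inv_le_of_mul_mem_Ioc hx (m := cofactor c) V (forall_mem_image.mpr fun a ha =>
      ⟨(hF ha).2 ▸ hmem a (hF ha).1, hbig a (hF ha).1⟩) hH
  calc ∑ a ∈ F, recipProd a = ∑ a ∈ F, (a p : ℝ)⁻¹ * recipProd c :=
        sum_congr rfl fun a ha => by rw [recipProd_eq_inv_mul_update a p, (hF ha).2]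
    _ = (∑ u ∈ V, (u : ℝ)⁻¹) * recipProd c := by
        rw [sum_image hinj, sum_mul]
    _ ≤ 3 * (H / x) * recipProd c := mul_le_mul_of_nonneg_right hV (recipProd_nonneg c)

/-- The number of tuples with entries in `[1, X]` and product `r`: for `r ≤ X` this is the divisor
function of order `|α|`. -/
def tupleCount (α : Type*) [Fintype α] [DecidableEq α] (X r : ℕ) : ℕ :=
  #{a ∈ tupleBox α X | ∏ i, a i = r}

lemma sum_tupleBox_comp_prod (f : ℕ → ℝ) :
    ∑ a ∈ tupleBox α X, f (∏ i, a i) =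
      ∑ r ∈ (tupleBox α X).image (fun a => ∏ i, a i), tupleCount α X r * f r := by
  rw [sum_comp f fun a : α → ℕ => ∏ i, a i]
  simp only [tupleCount, nsmul_eq_mul]

lemma sum_tupleCount_mul_inv_le (Q : Finset ℕ) :
    ∑ r ∈ Q, (tupleCount α X r : ℝ) * (r : ℝ)⁻¹ ≤ (harmonic X : ℝ) ^ Fintype.card α := by
  rw [← sum_recipProd_tupleBox]
  refine le_of_eq_of_le (sum_congr rfl fun r _ => ?_) (sum_fiberwise_le_sum_of_sum_fiber_nonneg
    (t := Q) (g := fun a : α → ℕ => ∏ i, a i) fun _ _ => sum_nonneg fun a _ => recipProd_nonneg a)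
  rw [tupleCount, ← nsmul_eq_mul, ← sum_const]
  exact sum_congr rfl fun a ha => by rw [recipProd, (mem_filter.mp ha).2]

end Tuples

section Matrices

variable {ι κ : Type*} [Fintype ι] [Fintype κ] {x H X : ℕ}

/-- The product of the entries of the matrix `g` in row `i`. -/
def rowProd (g : ι × κ → ℕ) (i : ι) : ℕ := ∏ j, g (i, j)

/-- The product of the entries of the matrix `g` in column `j`. -/
def colProd (g : ι × κ → ℕ) (j : κ) : ℕ := ∏ i, g (i, j)

lemma prod_rowProd (g : ι × κ → ℕ) : ∏ i, rowProd g i = ∏ p, g p :=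
  (Fintype.prod_prod_type g).symm

lemma colProd_eq_mul_colProd_update_one {ι κ : Type*} [Fintype ι] [DecidableEq ι] [DecidableEq κ]
    (g : ι × κ → ℕ) (i : ι) (j : κ) :
    colProd g j = g (i, j) * colProd (update g (i, j) 1) j := by
  rw [colProd, prod_eq_mul_prod_update_one (fun l => g (l, j)) i]
  simp only [colProd, update_apply, Prod.mk.injEq, and_true]

lemma exists_rowProd_eq_colProd_eq {a : ι → ℕ} {b : κ → ℕ} (ha : ∀ i, a i ≠ 0)
    (h : ∏ i, a i = ∏ j, b j) : ∃ g : ι × κ → ℕ, rowProd g = a ∧ colProd g = b := by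
  obtain ⟨g, hrow, hcol⟩ := exists_matrix_of_prod_eq_prod (fun i _ => ha i) h
  exact ⟨uncurry g, funext fun i => hrow i (mem_univ i), funext fun j => hcol j (mem_univ j)⟩

variable [DecidableEq ι] [DecidableEq κ]

lemma mem_tupleBox_of_rowProd_mem_Icc {g : ι × κ → ℕ} (hg : ∀ i, rowProd g i ∈ Icc 1 X) :
    g ∈ tupleBox (ι × κ) X := by
  refine mem_tupleBox.mpr fun ⟨i, j⟩ => ?_
  obtain ⟨hpos, hle⟩ := mem_Icc.mp (hg i)
  have hdvd : g (i, j) ∣ rowProd g i := dvd_prod_of_mem (fun j => g (i, j)) (mem_univ j)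
  exact ⟨Nat.pos_of_dvd_of_pos hdvd hpos, (Nat.le_of_dvd hpos hdvd).trans hle⟩

lemma injective_row_col_minor {ι κ R : Type*} (i₀ : ι) (j₀ : κ) :
    Injective fun g : ι × κ → R => ((fun j => g (i₀, j), fun i => g (i, j₀)),
      fun p : {i // i ≠ i₀} × {j // j ≠ j₀} => g (p.1, p.2)) := by
  intro g g' h
  simp only [Prod.mk.injEq] at h
  obtain ⟨⟨hrow, hcol⟩, hminor⟩ := h
  funext ⟨i, j⟩
  by_cases hi : i = i₀
  · exact hi ▸ congrFun hrow j
  by_cases hj : j = j₀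
  · exact hj ▸ congrFun hcol i
  · exact congrFun hminor (⟨i, hi⟩, ⟨j, hj⟩)

lemma recipProd_eq_mul_of_apply_eq_one {g : ι × κ → ℕ} {i₀ : ι} {j₀ : κ} (h : g (i₀, j₀) = 1) :
    recipProd g = (rowProd g i₀ : ℝ)⁻¹ * (colProd g j₀ : ℝ)⁻¹ *
      recipProd fun p : {i // i ≠ i₀} × {j // j ≠ j₀} => g (p.1, p.2) := by
  have hsplit : ∏ p, g p = rowProd g i₀ * colProd g j₀ *
      ∏ p : {i // i ≠ i₀} × {j // j ≠ j₀}, g (p.1, p.2) := by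
    rw [← prod_rowProd, Fintype.prod_eq_mul_prod_subtype_ne _ i₀, mul_assoc, colProd,
      Fintype.prod_eq_mul_prod_subtype_ne (fun i => g (i, j₀)) i₀, h, one_mul,
      Fintype.prod_prod_type, ← prod_mul_distrib]
    exact congrArg _ (prod_congr rfl fun i _ =>
      Fintype.prod_eq_mul_prod_subtype_ne (fun j => g (i, j)) j₀)
  simp only [recipProd, hsplit, Nat.cast_mul, mul_inv]

lemma sq_tupleCount_le (X r : ℕ) : tupleCount ι X r ^ 2 ≤ tupleCount (ι × ι) X r := by
  rw [sq, tupleCount, ← card_product]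
  refine (card_le_card ?_).trans
    (card_image_le (f := fun g : ι × ι → ℕ => (rowProd g, colProd g)))
  rintro ⟨a, b⟩ hab
  obtain ⟨⟨ha, har⟩, -, hbr⟩ := (mem_product.mp hab).imp mem_filter.mp mem_filter.mp
  rw [mem_tupleBox] at ha
  obtain ⟨g, rfl, rfl⟩ := exists_rowProd_eq_colProd_eq
    (fun i => Nat.one_le_iff_ne_zero.mp (ha i).1) (har.trans hbr.symm)
  have hg := mem_tupleBox_of_rowProd_mem_Icc fun i => mem_Icc.mpr (ha i)
  exact mem_image_of_mem _ (mem_filter.mpr ⟨hg, (prod_rowProd g).symm.trans har⟩)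

lemma sum_sq_tupleCount_mul_inv_le (Q : Finset ℕ) :
    ∑ r ∈ Q, (tupleCount ι X r : ℝ) ^ 2 * (r : ℝ)⁻¹ ≤ (harmonic X : ℝ) ^ (Fintype.card ι ^ 2) := by
  calc ∑ r ∈ Q, (tupleCount ι X r : ℝ) ^ 2 * (r : ℝ)⁻¹
      ≤ ∑ r ∈ Q, (tupleCount (ι × ι) X r : ℝ) * (r : ℝ)⁻¹ := by
        gcongr with r
        exact_mod_cast sq_tupleCount_le X r
    _ ≤ (harmonic X : ℝ) ^ (Fintype.card ι ^ 2) := by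
        rw [sq, ← Fintype.card_prod]
        exact sum_tupleCount_mul_inv_le Q

lemma sum_recipProd_mul_closePair_le (hx : 0 < x) (hH : H ≤ x) :
    ∑ p ∈ tupleBox ι X ×ˢ tupleBox ι X with ClosePair x H (∏ i, p.1 i) (∏ i, p.2 i),
      recipProd p.1 * recipProd p.2 ≤ 4 * (H / x) * (harmonic X : ℝ) ^ (Fintype.card ι ^ 2) := by
  let K (r c : ℕ) : ℝ := if ClosePair x H r c then (r : ℝ)⁻¹ * (c : ℝ)⁻¹ else 0
  have hK (r c) : 0 ≤ K r c := by unfold K; positivity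
  have hKsymm (r c) : K r c = K c r := by simp only [K, closePair_comm, mul_comm]
  set Q := (tupleBox ι X).image fun a => ∏ i, a i
  have hKsum : ∀ r ∈ Q, ∑ c ∈ Q, K r c ≤ 4 * (H / x) * (r : ℝ)⁻¹ := forall_mem_image.mpr
    fun a ha => by
      have hr : 0 < ∏ i, a i := prod_pos fun i _ => (mem_tupleBox.mp ha i).1
      simp only [K]
      rw [← sum_filter, ← mul_sum, mul_comm]
      exact mul_le_mul_of_nonneg_right (sum_inv_closePair_le hx hH hr Q) (by positivity)
  calc _ = ∑ a ∈ tupleBox ι X, ∑ b ∈ tupleBox ι X, K (∏ i, a i) (∏ i, b i) := by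
        rw [sum_filter, sum_product]
        rfl
    _ = ∑ r ∈ Q, ∑ c ∈ Q, tupleCount ι X r * tupleCount ι X c * K r c := by
        simp only [fun a : ι → ℕ => sum_tupleBox_comp_prod (α := ι) (X := X) (K (∏ i, a i))]
        rw [sum_tupleBox_comp_prod fun r => ∑ c ∈ Q, tupleCount ι X c * K r c]
        simp only [mul_sum, mul_assoc, Q]
    _ ≤ ∑ r ∈ Q, (tupleCount ι X r : ℝ) ^ 2 * ∑ c ∈ Q, K r c :=
        sum_sum_mul_mul_le_of_symm Q _ hK hKsymm
    _ ≤ ∑ r ∈ Q, (tupleCount ι X r : ℝ) ^ 2 * (4 * (H / x) * (r : ℝ)⁻¹) :=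
        sum_le_sum fun r hr => mul_le_mul_of_nonneg_left (hKsum r hr) (sq_nonneg _)
    _ = 4 * (H / x) * ∑ r ∈ Q, (tupleCount ι X r : ℝ) ^ 2 * (r : ℝ)⁻¹ := by
        rw [mul_sum]
        exact sum_congr rfl fun r _ => mul_left_comm _ _ _
    _ ≤ _ := mul_le_mul_of_nonneg_left (sum_sq_tupleCount_mul_inv_le Q) (by positivity)

end Matrices

section Clearing

variable {ι κ : Type*} [DecidableEq κ] {x H : ℕ}

/-- The matrix `g` with the entry of each row `i` in column `σ i` replaced by `1`. -/
def clearAlong (σ : ι → κ) (g : ι × κ → ℕ) : ι × κ → ℕ := fun p => if p.2 = σ p.1 then 1 else g p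

lemma clearAlong_apply_self (σ : ι → κ) (g : ι × κ → ℕ) (i : ι) : clearAlong σ g (i, σ i) = 1 :=
  if_pos rfl

lemma clearAlong_mem_tupleBox [Fintype ι] [Fintype κ] [DecidableEq ι] {X : ℕ} {g : ι × κ → ℕ}
    (hg : g ∈ tupleBox (ι × κ) X) (σ : ι → κ) : clearAlong σ g ∈ tupleBox (ι × κ) X := by
  rw [mem_tupleBox] at hg ⊢
  intro p
  have := hg p
  simp only [clearAlong]
  split_ifs <;> omega

lemma rowProd_eq_mul_rowProd_clearAlong [Fintype κ] (σ : ι → κ) (g : ι × κ → ℕ) (i : ι) :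
    rowProd g i = g (i, σ i) * rowProd (clearAlong σ g) i := by
  simp only [rowProd, clearAlong, ← update_apply (fun j => g (i, j))]
  exact prod_eq_mul_prod_update_one (fun j => g (i, j)) (σ i)

lemma colProd_eq_mul_colProd_clearAlong [Fintype ι] {σ : ι → κ} (hσ : Injective σ)
    (g : ι × κ → ℕ) (i : ι) :
    colProd g (σ i) = g (i, σ i) * colProd (clearAlong σ g) (σ i) := by
  classical
  simp only [colProd, clearAlong, hσ.eq_iff, eq_comm (a := i),
    ← update_apply (fun l => g (l, σ i))]
  exact prod_eq_mul_prod_update_one (fun l => g (l, σ i)) i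

lemma colProd_clearAlong_of_notMem_range [Fintype ι] {σ : ι → κ} {j : κ}
    (hj : j ∉ Set.range σ) (g : ι × κ → ℕ) : colProd (clearAlong σ g) j = colProd g j :=
  prod_congr rfl fun i _ => if_neg fun h : j = σ i => hj ⟨i, h.symm⟩

lemma card_le_sum_image_clearAlong [Fintype ι] [Fintype κ] (hH : H ≤ x) (σ : ι → κ)
    (M : Finset (ι × κ → ℕ)) (hrow : ∀ g ∈ M, ∀ i, rowProd g i ∈ Ioc x (x + H))
    (hbig : ∀ g ∈ M, ∀ i, x ≤ g (i, σ i) * H) :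
    (#M : ℝ) ≤ (3 * H) ^ Fintype.card ι * ∑ b ∈ M.image (clearAlong σ), recipProd b := by
  classical
  rw [card_eq_sum_card_image (clearAlong σ) M, mul_sum, Nat.cast_sum]
  refine sum_le_sum fun b hb => ?_
  set F := {g ∈ M | clearAlong σ g = b}
  have hF {g} (hg : g ∈ F) : g ∈ M ∧ clearAlong σ g = b := mem_filter.mp hg
  have hinj : Set.InjOn (fun (g : ι × κ → ℕ) i => g (i, σ i)) F := fun g hg g' hg' h => by
    funext ⟨i, j⟩
    by_cases hj : j = σ i
    · exact hj ▸ congrFun h i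
    · simpa [clearAlong, hj] using congrFun ((hF hg).2.trans (hF hg').2.symm) (i, j)
  let V (i : ι) : Finset ℕ := F.image fun g => g (i, σ i)
  have hV (i) : #(V i) * rowProd b i ≤ 3 * H :=
    card_mul_le_of_mul_mem_Ioc (V i) (forall_mem_image.mpr fun g hg =>
      ⟨(hF hg).2 ▸ rowProd_eq_mul_rowProd_clearAlong σ g i ▸ hrow g (hF hg).1 i,
        hbig g (hF hg).1 i⟩) hH
  have hb (i) : 0 < rowProd b i := by
    obtain ⟨g, hg, rfl⟩ := mem_image.mp hb
    have := rowProd_eq_mul_rowProd_clearAlong σ g i ▸ hrow g hg i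
    exact Nat.pos_of_mul_pos_left (x.zero_le.trans_lt (mem_Ioc.mp this).1)
  have hcard : #F ≤ ∏ i, #(V i) := by
    rw [← card_image_of_injOn hinj, ← Fintype.card_piFinset]
    exact card_le_card (image_subset_iff.mpr fun g hg =>
      Fintype.mem_piFinset.mpr fun i => mem_image_of_mem _ hg)
  rw [recipProd, ← div_eq_mul_inv, ← prod_rowProd, le_div_iff₀ (mod_cast prod_pos fun i _ => hb i)]
  exact_mod_cast calc #F * ∏ i, rowProd b i ≤ (∏ i, #(V i)) * ∏ i, rowProd b i :=
        Nat.mul_le_mul_right _ hcard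
    _ = ∏ i, #(V i) * rowProd b i := prod_mul_distrib.symm
    _ ≤ (3 * H) ^ Fintype.card ι := prod_le_pow_card univ _ _ fun i _ => hV i

lemma exists_closePair_clearAlong [Fintype ι] [Fintype κ] {σ : ι → κ} (hσ : Bijective σ)
    {g : ι × κ → ℕ} (hrow : ∀ i, rowProd g i ∈ Ioc x (x + H))
    (hcol : ∀ j, colProd g j ∈ Ioc x (x + H))
    (hne : univ.val.map (rowProd g) ≠ univ.val.map (colProd g)) :
    ∃ i, ClosePair x H (rowProd (clearAlong σ g) i) (colProd (clearAlong σ g) (σ i)) := by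
  by_contra! hclose
  refine hne ?_
  have heq : rowProd g = colProd g ∘ σ := funext fun i => by
    have hr := rowProd_eq_mul_rowProd_clearAlong σ g i
    have hc := colProd_eq_mul_colProd_clearAlong hσ.injective g i
    by_contra hi
    refine hclose i (closePair_of_mul_mem_Ioc (hr ▸ hrow i) (hc ▸ hcol (σ i)) fun h => hi ?_)
    rw [comp_apply, hr, hc, h]
  rw [heq, ← Multiset.map_map, ← Multiset.map_univ_val_equiv (Equiv.ofBijective σ hσ)]
  rfl

end Clearing

section NontrivialMatrices

variable {ι : Type*} [Fintype ι] [DecidableEq ι] {x H X : ℕ}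

lemma sum_recipProd_le_of_closePair (hx : 0 < x) (hH : H ≤ x) (hX : 1 ≤ X) (i₀ j₀ : ι)
    {A : Finset (ι × ι → ℕ)} (hA : A ⊆ tupleBox (ι × ι) X) (hone : ∀ b ∈ A, b (i₀, j₀) = 1)
    (hclose : ∀ b ∈ A, ClosePair x H (rowProd b i₀) (colProd b j₀)) :
    ∑ b ∈ A, recipProd b ≤ 4 * (H / x) * (harmonic X : ℝ) ^ (2 * Fintype.card ι ^ 2) := by
  let β := {i // i ≠ i₀} × {j // j ≠ j₀}
  let T := {p ∈ tupleBox ι X ×ˢ tupleBox ι X | ClosePair x H (∏ i, p.1 i) (∏ i, p.2 i)}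
  let φ (b : ι × ι → ℕ) : ((ι → ℕ) × (ι → ℕ)) × (β → ℕ) :=
    ((fun j => b (i₀, j), fun i => b (i, j₀)), fun p => b (p.1, p.2))
  let w (q : ((ι → ℕ) × (ι → ℕ)) × (β → ℕ)) : ℝ :=
    recipProd q.1.1 * recipProd q.1.2 * recipProd q.2
  have hmaps : A.image φ ⊆ T ×ˢ tupleBox β X := image_subset_iff.mpr fun b hb => by
    have hbox := mem_tupleBox.mp (hA hb)
    exact mem_product.mpr ⟨mem_filter.mpr ⟨mem_product.mpr
      ⟨mem_tupleBox.mpr fun _ => hbox _, mem_tupleBox.mpr fun _ => hbox _⟩, hclose b hb⟩,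
      mem_tupleBox.mpr fun _ => hbox _⟩
  have hcard : Fintype.card β ≤ Fintype.card ι ^ 2 := by
    rw [Fintype.card_prod, sq]
    exact Nat.mul_le_mul (Fintype.card_subtype_le _) (Fintype.card_subtype_le _)
  calc ∑ b ∈ A, recipProd b = ∑ q ∈ A.image φ, w q := by
        rw [sum_image (injective_row_col_minor i₀ j₀).injOn]
        exact sum_congr rfl fun b hb => recipProd_eq_mul_of_apply_eq_one (hone b hb)
    _ ≤ ∑ q ∈ T ×ˢ tupleBox β X, w q :=
        sum_le_sum_of_subset_of_nonneg hmaps fun q _ _ => mul_nonneg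
          (mul_nonneg (recipProd_nonneg _) (recipProd_nonneg _)) (recipProd_nonneg _)
    _ = (∑ p ∈ T, recipProd p.1 * recipProd p.2) * (harmonic X : ℝ) ^ Fintype.card β := by
        rw [sum_product, ← sum_recipProd_tupleBox, sum_mul_sum]
    _ ≤ 4 * (H / x) * (harmonic X : ℝ) ^ (Fintype.card ι ^ 2) *
          (harmonic X : ℝ) ^ (Fintype.card ι ^ 2) := by
        have := harmonic_nonneg X
        gcongr
        · exact sum_recipProd_mul_closePair_le hx hH
        · exact one_le_harmonic hX
    _ = 4 * (H / x) * (harmonic X : ℝ) ^ (2 * Fintype.card ι ^ 2) := by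
        rw [two_mul, pow_add, mul_assoc]

/-- The matrices whose row products and column products form a nontrivial solution. -/
def nontrivialMatrices (ι : Type*) [Fintype ι] [DecidableEq ι] (x H : ℕ) : Finset (ι × ι → ℕ) :=
  {g ∈ tupleBox (ι × ι) (x + H) | (∀ i, rowProd g i ∈ Ioc x (x + H)) ∧
    (∀ j, colProd g j ∈ Ioc x (x + H)) ∧ univ.val.map (rowProd g) ≠ univ.val.map (colProd g)}

lemma mem_nontrivialMatrices {g : ι × ι → ℕ} : g ∈ nontrivialMatrices ι x H ↔
    (∀ i, rowProd g i ∈ Ioc x (x + H)) ∧ (∀ j, colProd g j ∈ Ioc x (x + H)) ∧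
      univ.val.map (rowProd g) ≠ univ.val.map (colProd g) := by
  refine mem_filter.trans (and_iff_right_of_imp fun h =>
    mem_tupleBox_of_rowProd_mem_Icc fun i => ?_)
  have := mem_Ioc.mp (h.1 i)
  exact mem_Icc.mpr ⟨by omega, this.2⟩

lemma NkCount_le_card_nontrivialMatrices (k x H : ℕ) :
    NkCount k x H ≤ #(nontrivialMatrices (Fin k) x H) := by
  have hfin := (nontrivialMatrices (Fin k) x H).finite_toSet
  rw [← Set.ncard_coe_finset]
  refine (Set.ncard_le_ncard ?_ (hfin.image fun g => (rowProd g, colProd g))).trans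
    (Set.ncard_image_le hfin)
  rintro ⟨a, b⟩ ⟨ha, hb, hab, hne⟩
  obtain ⟨g, rfl, rfl⟩ := exists_rowProd_eq_colProd_eq
    (fun i => Nat.ne_zero_of_lt (mem_Ioc.mp (ha i)).1) hab
  exact ⟨g, mem_nontrivialMatrices.mpr ⟨ha, hb, hne⟩, rfl⟩

lemma image_clearAlong_nontrivialMatrices_subset (σ : ι → ι) :
    (nontrivialMatrices ι x H).image (clearAlong σ) ⊆ tupleBox (ι × ι) (x + H) :=
  image_subset_iff.mpr fun _ hg => clearAlong_mem_tupleBox (mem_filter.mp hg).1 σ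

lemma sum_recipProd_image_clearAlong_le_of_bijective (hx : 0 < x) (hH : H ≤ x) {σ : ι → ι}
    (hσ : Bijective σ) :
    ∑ b ∈ (nontrivialMatrices ι x H).image (clearAlong σ), recipProd b ≤
      Fintype.card ι * (4 * (H / x) * (harmonic (x + H) : ℝ) ^ (2 * Fintype.card ι ^ 2)) := by
  refine sum_le_card_mul_of_forall_exists recipProd_nonneg
    (p := fun i b => ClosePair x H (rowProd b i) (colProd b (σ i))) ?_ fun i => ?_
  · refine forall_mem_image.mpr fun g hg => ?_
    obtain ⟨hrow, hcol, hne⟩ := mem_nontrivialMatrices.mp hg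
    exact exists_closePair_clearAlong hσ hrow hcol hne
  · refine sum_recipProd_le_of_closePair hx hH (by omega) i (σ i)
      ((filter_subset _ _).trans (image_clearAlong_nontrivialMatrices_subset σ))
      (fun b hb => ?_) fun b hb => (mem_filter.mp hb).2
    obtain ⟨g, -, rfl⟩ := mem_image.mp (mem_filter.mp hb).1
    exact clearAlong_apply_self σ g i

lemma sum_recipProd_image_clearAlong_le_of_not_surjective (hx : 0 < x) (hH : H ≤ x)
    (hxH : x ^ Fintype.card ι ≤ x * H ^ Fintype.card ι) {σ : ι → ι} (hσ : ¬Surjective σ) :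
    ∑ b ∈ (nontrivialMatrices ι x H).image (clearAlong σ), recipProd b ≤
      Fintype.card ι * (3 * (H / x) * (harmonic (x + H) : ℝ) ^ (Fintype.card ι ^ 2)) := by
  obtain ⟨j, hj⟩ := not_forall.mp hσ
  have hcol : ∀ b ∈ (nontrivialMatrices ι x H).image (clearAlong σ),
      colProd b j ∈ Ioc x (x + H) := forall_mem_image.mpr fun g hg => by
    rw [colProd_clearAlong_of_notMem_range hj]
    exact (mem_nontrivialMatrices.mp hg).2.1 j
  rw [sq, ← Fintype.card_prod]
  refine sum_le_card_mul_of_forall_exists recipProd_nonneg (p := fun i b => x ≤ b (i, j) * H)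
    (fun b hb => exists_le_mul_of_lt_prod hx hxH (mem_Ioc.mp (hcol b hb)).1) fun i => ?_
  refine sum_recipProd_le_of_mul_mem_Ioc hx hH (i, j) (colProd · j)
    ((filter_subset _ _).trans (image_clearAlong_nontrivialMatrices_subset σ))
    (fun b hb => ?_) fun b hb => (mem_filter.mp hb).2
  rw [← colProd_eq_mul_colProd_update_one]
  exact hcol b (mem_filter.mp hb).1

lemma sum_recipProd_image_clearAlong_le (hx : 0 < x) (hH : H ≤ x)
    (hxH : x ^ Fintype.card ι ≤ x * H ^ Fintype.card ι) (σ : ι → ι) :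
    ∑ b ∈ (nontrivialMatrices ι x H).image (clearAlong σ), recipProd b ≤
      Fintype.card ι * (4 * (H / x) * (harmonic (x + H) : ℝ) ^ (2 * Fintype.card ι ^ 2)) := by
  by_cases hσ : Surjective σ
  · exact sum_recipProd_image_clearAlong_le_of_bijective hx hH
      (Finite.surjective_iff_bijective.mp hσ)
  have hone : 1 ≤ (harmonic (x + H) : ℝ) := one_le_harmonic (by omega)
  refine (sum_recipProd_image_clearAlong_le_of_not_surjective hx hH hxH hσ).trans ?_
  gcongr
  · norm_num
  · omega

lemma card_nontrivialMatrices_le (hx : 0 < x) (hH : H ≤ x)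
    (hxH : x ^ Fintype.card ι ≤ x * H ^ Fintype.card ι) :
    (#(nontrivialMatrices ι x H) : ℝ) ≤ (Fintype.card ι : ℝ) ^ Fintype.card ι *
      ((3 * H) ^ Fintype.card ι * (Fintype.card ι *
        (4 * (H / x) * (harmonic (x + H) : ℝ) ^ (2 * Fintype.card ι ^ 2)))) := by
  have hlarge : ∀ g ∈ nontrivialMatrices ι x H, ∃ σ : ι → ι, ∀ i, x ≤ g (i, σ i) * H :=
    fun g hg => Classical.axiomOfChoice fun i =>
      exists_le_mul_of_lt_prod hx hxH (mem_Ioc.mp ((mem_nontrivialMatrices.mp hg).1 i)).1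
  rw [← Nat.cast_pow, ← Fintype.card_fun, ← nsmul_one #(nontrivialMatrices ι x H), ← sum_const]
  refine sum_le_card_mul_of_forall_exists (fun _ => zero_le_one) hlarge fun σ => ?_
  set M := {g ∈ nontrivialMatrices ι x H | ∀ i, x ≤ g (i, σ i) * H}
  have hM : M ⊆ nontrivialMatrices ι x H := filter_subset _ _
  calc ∑ _ ∈ M, (1 : ℝ) = #M := by rw [sum_const, nsmul_one]
    _ ≤ (3 * H) ^ Fintype.card ι * ∑ b ∈ M.image (clearAlong σ), recipProd b :=
        card_le_sum_image_clearAlong hH σ M (fun g hg => (mem_nontrivialMatrices.mp (hM hg)).1)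
          fun g hg => (mem_filter.mp hg).2
    _ ≤ _ := by
        gcongr
        exact (sum_le_sum_of_subset_of_nonneg (image_subset_image hM)
          fun b _ _ => recipProd_nonneg b).trans
            (sum_recipProd_image_clearAlong_le hx hH hxH σ)

end NontrivialMatrices

lemma harmonic_add_le_two_mul_one_add_log {x H : ℕ} (hx : 0 < x) (hH : H ≤ x) :
    (harmonic (x + H) : ℝ) ≤ 2 * (1 + Real.log x) := by
  have hx' : (0 : ℝ) < x := mod_cast hx
  have hlog : 0 ≤ Real.log x := Real.log_natCast_nonneg x
  calc (harmonic (x + H) : ℝ) ≤ 1 + Real.log (x + H : ℕ) := harmonic_le_one_add_log _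
    _ ≤ 1 + Real.log (2 * x) := by
        gcongr
        exact_mod_cast (by omega : x + H ≤ 2 * x)
    _ = 1 + (Real.log 2 + Real.log x) := by rw [Real.log_mul two_ne_zero hx'.ne']
    _ ≤ 2 * (1 + Real.log x) := by linarith [Real.log_two_lt_d9]

lemma pow_le_mul_pow_of_rpow_one_sub_le {x y : ℝ} {k : ℕ} {δ : ℝ} (hx : 1 ≤ x)
    (hδ : k * δ ≤ 1) (h : x ^ (1 - δ) ≤ y) : x ^ k ≤ x * y ^ k := by
  have hx' : 0 < x := zero_lt_one.trans_le hx
  calc x ^ k = x ^ (k * δ) * (x ^ (1 - δ)) ^ k := by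
        rw [← Real.rpow_mul_natCast hx'.le, ← Real.rpow_add hx', ← Real.rpow_natCast]
        ring_nf
    _ ≤ x ^ (1 : ℝ) * y ^ k := by gcongr
    _ = x * y ^ k := by rw [Real.rpow_one]

/-- The hypothesis `hxH` is `x ^ (1 - 1 / k) ≤ H` without real powers. -/
theorem stmt12_general {k x H : ℕ} (hx : 0 < x) (hxH : x ^ k ≤ x * H ^ k) (hH : H ≤ x) :
    (NkCount k x H : ℝ) ≤ 4 * k * (3 * k) ^ k * 4 ^ k ^ 2 * H ^ k * (H / x) *
      (1 + Real.log x) ^ (2 * k ^ 2) := by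
  have hcard := card_nontrivialMatrices_le (ι := Fin k) hx hH (by simpa using hxH)
  rw [Fintype.card_fin] at hcard
  calc (NkCount k x H : ℝ) ≤ #(nontrivialMatrices (Fin k) x H) :=
        mod_cast NkCount_le_card_nontrivialMatrices k x H
    _ ≤ _ := hcard
    _ ≤ k ^ k * ((3 * H) ^ k * (k * (4 * (H / x) * (2 * (1 + Real.log x)) ^ (2 * k ^ 2)))) := by
        have := harmonic_nonneg (x + H)
        gcongr
        exact harmonic_add_le_two_mul_one_add_log hx hH
    _ = _ := by
        rw [mul_pow 2, pow_mul 2 2, mul_pow, mul_pow]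
        ring

/-- for every `k ≥ 1` there are `C_k > 0` and a threshold `x₀(k)` such
that for all integers `x ≥ x₀(k)` and `H` with `x^{1 − 1/(50k)} ≤ H ≤ x`, one has
`N_k(x, H) ≤ C_k · H^k · (H/x) · (1 + log x)^{2k²+2}`. -/
theorem stmt12 (k : ℕ) (hk : 1 ≤ k) :
    ∃ C : ℝ, 0 < C ∧ ∃ x₀ : ℕ, ∀ x H : ℕ, x₀ ≤ x →
      (x : ℝ) ^ ((1 : ℝ) - 1 / (50 * (k : ℝ))) ≤ (H : ℝ) → H ≤ x →
      (NkCount k x H : ℝ) ≤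
        C * (H : ℝ) ^ k * ((H : ℝ) / (x : ℝ)) * (1 + Real.log x) ^ (2 * k ^ 2 + 2) := by
  refine ⟨4 * k * (3 * k) ^ k * 4 ^ k ^ 2, by positivity, 1, fun x H hx hxH hH => ?_⟩
  have hk50 : k * (1 / (50 * k) : ℝ) ≤ 1 := by field_simp; norm_num
  have hpow := pow_le_mul_pow_of_rpow_one_sub_le (mod_cast hx) hk50 hxH
  refine (stmt12_general hx (mod_cast hpow) hH).trans ?_
  gcongr
  · linarith [Real.log_natCast_nonneg x]
  · omega
end

section
/- For every integer k ≥ 1 there exists a constant c_k > 0 such that the following holds. Let H : ℕ → ℕ be any function with H(X) → ∞ as X → ∞ and H(X) ≤ X·(log X)^{−c_k} for all sufficiently large X. For integers x₁, x₂ let T(x₁, x₂) denote the number of tuples (n₁, …, n_{2k}; m₁, …, m_{2k}) of integers with x₁ < n_i ≤ x₁ + H(X) and x₂ < m_i ≤ x₂ + H(X) for all i, satisfying n₁⋯n_k·m₁⋯m_k = n_{k+1}⋯n_{2k}·m_{k+1}⋯m_{2k}. Then ( (1/X²) ∑_{x₁=1}^{X} ∑_{x₂=1}^{X} T(x₁,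 x₂) − k!²·H(X)^{2k} ) / H(X)^{2k} → 0 as X → ∞. -/
/-- `T(x₁, x₂)` (with interval length `Hv`): the number of tuples
`(n₁,…,n_{2k}; m₁,…,m_{2k})` with `n_i ∈ (x₁, x₁+Hv]`, `m_i ∈ (x₂, x₂+Hv]`, and
`n₁⋯n_k·m₁⋯m_k = n_{k+1}⋯n_{2k}·m_{k+1}⋯m_{2k}`.
Here `t.1 i = n_i`, `t.2.1 i = n_{k+i}`, `t.2.2.1 i = m_i`, `t.2.2.2 i = m_{k+i}`. -/
noncomputable def crossCount (k x₁ x₂ Hv : ℕ) : ℕ :=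
  Nat.card {t : (Fin k → ℕ) × (Fin k → ℕ) × (Fin k → ℕ) × (Fin k → ℕ) //
    (∀ i, t.1 i ∈ Finset.Ioc x₁ (x₁ + Hv)) ∧ (∀ i, t.2.1 i ∈ Finset.Ioc x₁ (x₁ + Hv)) ∧
    (∀ i, t.2.2.1 i ∈ Finset.Ioc x₂ (x₂ + Hv)) ∧ (∀ i, t.2.2.2 i ∈ Finset.Ioc x₂ (x₂ + Hv)) ∧
    (∏ i, t.1 i) * (∏ i, t.2.2.1 i) = (∏ i, t.2.1 i) * (∏ i, t.2.2.2 i)}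

/-!
We bound the mean number of solutions of `∏ nᵢ * ∏ mⱼ = ∏ n'ᵢ * ∏ m'ⱼ` with `k` variables `nᵢ`,
`n'ᵢ` in `(x, x + H]` and `l` variables `mⱼ`, `m'ⱼ` in `(y, y + H]` by removing one variable from
each side at a time. If `n'₀` equals some `nᵢ`, cancel the two: this leaves `(k - 1, l)` and costs
a factor `k * H`. Otherwise `n'₀` is a divisor of `∏ nᵢ * ∏ mⱼ` in the same short interval as the
`nᵢ`, but different from all of them. Write `n'₀ = e * ∏ aᵢ` with `e ∣ ∏ mⱼ` and `aᵢ ∣ nᵢ`. Each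
`aᵢ` divides two distinct elements of an interval of length `H`, so `aᵢ ≤ H`, and double counting
shows that such `n'₀` occur, on average, only `H / X` times up to powers of `log X`. The remaining
`n'ᵢ` and `m'ⱼ` divide `∏ nᵢ * ∏ mⱼ`, so Cauchy–Schwarz and moment bounds for the divisor function
make the contribution of these solutions smaller than the main term by a factor `√(H / X)` times a
power of `log X`. The recursion then yields the main term `k! * l! * H ^ (k + l)`, which the
permutation solutions with distinct `nᵢ` and distinct `mⱼ` already attain asymptotically.
-/

open Finset

section Divisors

theorem card_divisors_mul_le (a b : ℕ) : #(a * b).divisors ≤ #a.divisors * #b.divisors := by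
  rw [Nat.divisors_mul]
  exact card_mul_le

theorem card_divisors_prod_le {ι : Type*} (s : Finset ι) (f : ι → ℕ) :
    #(∏ i ∈ s, f i).divisors ≤ ∏ i ∈ s, #(f i).divisors :=
  le_prod_of_submultiplicative (fun a : ℕ => #a.divisors) (by simp) card_divisors_mul_le s f

theorem exists_mem_divisors_of_mem_divisors_prod {ι : Type*} [Fintype ι] {n : ι → ℕ} {d : ℕ}
    (hd : d ∈ (∏ i, n i).divisors) : ∃ a : ι → ℕ, (∀ i, a i ∈ (n i).divisors) ∧ ∏ i, a i = d := by
  rw [Finset.nat_divisors_prod, ← mem_coe, coe_prod, Set.mem_fintype_prod] at hd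
  obtain ⟨a, ha, rfl⟩ := hd
  exact ⟨a, fun i => ha i, rfl⟩

theorem sum_card_divisors_mul_le_sq {f : ℕ → ℝ} (hf₀ : ∀ n, 0 ≤ f n)
    (hf : ∀ m n, f (m * n) ≤ f m * f n) (Y : ℕ) :
    ∑ n ∈ Icc 1 Y, #n.divisors * f n ≤ (∑ n ∈ Icc 1 Y, f n) ^ 2 := by
  calc ∑ n ∈ Icc 1 Y, #n.divisors * f n
      = ∑ n ∈ Icc 1 Y, ∑ p ∈ Icc 1 Y ×ˢ Icc 1 Y with p.1 * p.2 = n, f (p.1 * p.2) := by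
        refine sum_congr rfl fun n hn => ?_
        obtain ⟨h1, hnY⟩ := mem_Icc.1 hn
        have hcard : #n.divisors = #{p ∈ Icc 1 Y ×ˢ Icc 1 Y | p.1 * p.2 = n} := by
          rw [← card_map, Nat.map_div_right_divisors,
            Nat.divisorsAntidiagonal_eq_prod_filter_of_le (by omega) hnY]
          rfl
        rw [sum_congr rfl fun p hp => congrArg f (mem_filter.1 hp).2, sum_const, nsmul_eq_mul,
          hcard]
    _ ≤ ∑ p ∈ Icc 1 Y ×ˢ Icc 1 Y, f (p.1 * p.2) :=
        sum_fiberwise_le_sum_of_sum_fiber_nonneg fun _ _ => sum_nonneg fun _ _ => hf₀ _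
    _ ≤ ∑ p ∈ Icc 1 Y ×ˢ Icc 1 Y, f p.1 * f p.2 := sum_le_sum fun p _ => hf _ _
    _ = (∑ n ∈ Icc 1 Y, f n) ^ 2 := by rw [sq, sum_mul_sum, sum_product]

theorem sum_inv_le_one_add_log (Y : ℕ) : ∑ n ∈ Icc 1 Y, (n : ℝ)⁻¹ ≤ 1 + Real.log Y := by
  simpa [harmonic_eq_sum_Icc] using harmonic_le_one_add_log Y

theorem sum_card_divisors_pow_div_le (A Y : ℕ) :
    ∑ n ∈ Icc 1 Y, (#n.divisors : ℝ) ^ A / n ≤ (1 + Real.log Y) ^ 2 ^ A := by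
  induction A with
  | zero => simpa using sum_inv_le_one_add_log Y
  | succ A ih =>
    calc ∑ n ∈ Icc 1 Y, (#n.divisors : ℝ) ^ (A + 1) / n
        = ∑ n ∈ Icc 1 Y, #n.divisors * ((#n.divisors : ℝ) ^ A / n) :=
          sum_congr rfl fun n _ => by ring
      _ ≤ (∑ n ∈ Icc 1 Y, (#n.divisors : ℝ) ^ A / n) ^ 2 := by
          refine sum_card_divisors_mul_le_sq (fun n => by positivity) (fun m n => ?_) Y
          rw [div_mul_div_comm, ← mul_pow, ← Nat.cast_mul, ← Nat.cast_mul]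
          gcongr
          exact card_divisors_mul_le m n
      _ ≤ ((1 + Real.log Y) ^ 2 ^ A) ^ 2 := by gcongr
      _ = (1 + Real.log Y) ^ 2 ^ (A + 1) := by rw [pow_succ 2 A, pow_mul]

theorem sum_card_divisors_pow_le (A Y : ℕ) :
    ∑ n ∈ Icc 1 Y, (#n.divisors : ℝ) ^ A ≤ Y * (1 + Real.log Y) ^ 2 ^ A := by
  calc ∑ n ∈ Icc 1 Y, (#n.divisors : ℝ) ^ A
      ≤ ∑ n ∈ Icc 1 Y, Y * ((#n.divisors : ℝ) ^ A / n) := by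
        refine sum_le_sum fun n hn => ?_
        obtain ⟨h1, hnY⟩ := mem_Icc.1 hn
        have hn₀ : (0 : ℝ) < n := by exact_mod_cast h1
        rw [mul_div_assoc', le_div_iff₀ hn₀, mul_comm]
        gcongr
    _ ≤ Y * (1 + Real.log Y) ^ 2 ^ A := by
        rw [← mul_sum]
        gcongr
        exact sum_card_divisors_pow_div_le A Y

theorem sum_div_le (H : ℕ) : ((∑ a ∈ Icc 1 H, H / a : ℕ) : ℝ) ≤ H * (1 + Real.log H) := by
  calc ((∑ a ∈ Icc 1 H, H / a : ℕ) : ℝ) ≤ ∑ a ∈ Icc 1 H, H * (a : ℝ)⁻¹ := by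
        push_cast
        exact sum_le_sum fun a _ => Nat.cast_div_le
    _ ≤ H * (1 + Real.log H) := by
        rw [← mul_sum]
        gcongr
        exact sum_inv_le_one_add_log H

end Divisors

section ShortIntervals

theorem card_filter_mem_Ioc_le (S : Finset ℕ) (H n : ℕ) :
    #{x ∈ S | n ∈ Ioc x (x + H)} ≤ H := by
  calc #{x ∈ S | n ∈ Ioc x (x + H)} ≤ #(Ico (n - H) n) := by
        refine card_le_card fun x hx => ?_
        simp only [mem_filter, mem_Ioc, mem_Ico] at hx ⊢
        omega
    _ ≤ H := by
        rw [Nat.card_Ico]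
        omega

theorem sum_sum_Ioc_le {f : ℕ → ℝ} (hf : ∀ n, 0 ≤ f n) (X H : ℕ) :
    ∑ x ∈ Icc 1 X, ∑ n ∈ Ioc x (x + H), f n ≤ H * ∑ n ∈ Icc 1 (X + H), f n := by
  calc ∑ x ∈ Icc 1 X, ∑ n ∈ Ioc x (x + H), f n
      = ∑ n ∈ Icc 1 (X + H), ∑ x ∈ Icc 1 X with n ∈ Ioc x (x + H), f n := by
        refine sum_comm' fun x n => ?_
        simp only [mem_Icc, mem_Ioc, mem_filter]
        omega
    _ ≤ ∑ n ∈ Icc 1 (X + H), H * f n := by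
        refine sum_le_sum fun n _ => ?_
        rw [sum_const, nsmul_eq_mul]
        have := card_filter_mem_Ioc_le (Icc 1 X) H n
        have := hf n
        gcongr
    _ = H * ∑ n ∈ Icc 1 (X + H), f n := (mul_sum ..).symm

theorem sum_pow_sum_Ioc_le {f : ℕ → ℝ} (hf : ∀ n, 0 ≤ f n) (X H s : ℕ) :
    ∑ x ∈ Icc 1 X, (∑ n ∈ Ioc x (x + H), f n) ^ s ≤ H ^ s * ∑ n ∈ Icc 1 (X + H), f n ^ s := by
  cases s with
  | zero => simp
  | succ s =>
    calc ∑ x ∈ Icc 1 X, (∑ n ∈ Ioc x (x + H), f n) ^ (s + 1)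
        ≤ ∑ x ∈ Icc 1 X, (H : ℝ) ^ s * ∑ n ∈ Ioc x (x + H), f n ^ (s + 1) :=
          sum_le_sum fun x _ => by
            simpa using pow_sum_le_card_mul_sum_pow (s := Ioc x (x + H)) (fun n _ => hf n) s
      _ ≤ (H : ℝ) ^ s * (H * ∑ n ∈ Icc 1 (X + H), f n ^ (s + 1)) := by
          rw [← mul_sum]
          gcongr
          exact sum_sum_Ioc_le (fun n => pow_nonneg (hf n) _) X H
      _ = H ^ (s + 1) * ∑ n ∈ Icc 1 (X + H), f n ^ (s + 1) := by ring

theorem card_filter_dvd_Ioc_le (x H a : ℕ) : #{n ∈ Ioc x (x + H) | a ∣ n} ≤ H / a + 1 := by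
  have hdisj : Disjoint {n ∈ Ioc 0 x | a ∣ n} {n ∈ Ioc x (x + H) | a ∣ n} :=
    disjoint_filter_filter (Ioc_disjoint_Ioc_of_le le_rfl)
  have hunion : #{n ∈ Ioc 0 x | a ∣ n} + #{n ∈ Ioc x (x + H) | a ∣ n} =
      #{n ∈ Ioc 0 (x + H) | a ∣ n} := by
    rw [← card_union_of_disjoint hdisj, ← filter_union,
      Ioc_union_Ioc_eq_Ioc (Nat.zero_le x) (Nat.le_add_right x H)]
  rw [Nat.Ioc_filter_dvd_card_eq_div, Nat.Ioc_filter_dvd_card_eq_div] at hunion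
  have : (x + H) / a ≤ x / a + H / a + 1 := Nat.add_div_le_div_add_div_add_one x H a
  omega

theorem card_filter_dvd_ne_Ioc_le {x H M a : ℕ} (haM : a ∣ M) (hM : M ∈ Ioc x (x + H)) :
    #{n ∈ Ioc x (x + H) | a ∣ n ∧ M ≠ n} ≤ H / a := by
  have herase : {n ∈ Ioc x (x + H) | a ∣ n ∧ M ≠ n} =
      {n ∈ Ioc x (x + H) | a ∣ n}.erase M := by
    ext n
    simp only [mem_filter, mem_erase, ne_comm]
    tauto
  rw [herase, card_erase_of_mem (mem_filter.2 ⟨hM, haM⟩)]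
  exact Nat.sub_le_iff_le_add.2 (card_filter_dvd_Ioc_le x H a)

theorem le_of_dvd_of_mem_Ioc_of_ne {x H M n a : ℕ} (haM : a ∣ M) (hM : M ∈ Ioc x (x + H))
    (han : a ∣ n) (hn : n ∈ Ioc x (x + H)) (hne : M ≠ n) : a ≤ H := by
  have hcard : 0 < #{n ∈ Ioc x (x + H) | a ∣ n ∧ M ≠ n} :=
    card_pos.2 ⟨n, mem_filter.2 ⟨hn, han, hne⟩⟩
  exact (Nat.div_pos_iff.1 (hcard.trans_le (card_filter_dvd_ne_Ioc_le haM hM))).2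

end ShortIntervals

section Windows

variable {ι κ : Type*} [Fintype ι] [DecidableEq ι] [Fintype κ]

/-- The logarithmic factor `1 + log (2 * X)` in which all error terms are measured. The `2` is
there because integers up to `X + H ≤ 2 * X` occur. -/
noncomputable def logFactor (X : ℕ) : ℝ := 1 + Real.log (2 * X)

theorem one_add_log_le_logFactor {X Y : ℕ} (h : Y ≤ 2 * X) : 1 + Real.log Y ≤ logFactor X := by
  rcases Y.eq_zero_or_pos with rfl | hY
  · have := Real.log_natCast_nonneg (2 * X)
    simpa [logFactor] using this
  · have : (Y : ℝ) ≤ 2 * X := by exact_mod_cast h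
    unfold logFactor
    gcongr

theorem one_le_logFactor (X : ℕ) : 1 ≤ logFactor X := by
  simpa using one_add_log_le_logFactor (Nat.zero_le (2 * X))

theorem logFactor_nonneg (X : ℕ) : 0 ≤ logFactor X := zero_le_one.trans (one_le_logFactor X)

variable (ι) in
/-- The pairs `(x, n)` of a left end point `1 ≤ x ≤ X` and a tuple `n` with all entries in the
short interval `(x, x + H]`. -/
def shortTuples (X H : ℕ) : Finset (Σ _ : ℕ, ι → ℕ) :=
  (Icc 1 X).sigma fun x => Fintype.piFinset fun _ => Ioc x (x + H)

theorem sum_card_divisors_prod_pow_le {X H : ℕ} (hHX : H ≤ X) (A : ℕ) :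
    ∑ p ∈ shortTuples ι X H, (#(∏ i, p.2 i).divisors : ℝ) ^ A ≤
      2 * X * H ^ Fintype.card ι * logFactor X ^ 2 ^ (A * Fintype.card ι) := by
  set s := Fintype.card ι
  have hY : X + H ≤ 2 * X := by omega
  calc ∑ p ∈ shortTuples ι X H, (#(∏ i, p.2 i).divisors : ℝ) ^ A
      ≤ ∑ p ∈ shortTuples ι X H, ∏ i, (#(p.2 i).divisors : ℝ) ^ A := by
        refine sum_le_sum fun p _ => ?_
        rw [prod_pow]
        gcongr
        exact_mod_cast card_divisors_prod_le univ p.2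
    _ = ∑ x ∈ Icc 1 X, (∑ n ∈ Ioc x (x + H), (#n.divisors : ℝ) ^ A) ^ s := by
        rw [shortTuples, sum_sigma]
        refine sum_congr rfl fun x _ => ?_
        rw [← prod_univ_sum (fun _ => Ioc x (x + H)) fun _ n => (#n.divisors : ℝ) ^ A, prod_const,
          card_univ]
    _ ≤ H ^ s * ∑ n ∈ Icc 1 (X + H), ((#n.divisors : ℝ) ^ A) ^ s :=
        sum_pow_sum_Ioc_le (fun n => by positivity) X H s
    _ ≤ H ^ s * ((X + H : ℕ) * (1 + Real.log (X + H : ℕ)) ^ 2 ^ (A * s)) := by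
        simp_rw [← pow_mul]
        gcongr
        exact sum_card_divisors_pow_le (A * s) (X + H)
    _ ≤ H ^ s * ((2 * X : ℕ) * logFactor X ^ 2 ^ (A * s)) := by
        have := Real.log_natCast_nonneg (X + H)
        gcongr
        exact one_add_log_le_logFactor hY
    _ = 2 * X * H ^ s * logFactor X ^ 2 ^ (A * s) := by
        push_cast
        ring

/-- The divisors of `∏ nᵢ * ∏ mⱼ` which lie in `I` and differ from every `nᵢ`. -/
def newDivisors (I : Finset ℕ) (n : ι → ℕ) (m : κ → ℕ) : Finset ℕ :=
  {d ∈ ((∏ i, n i) * ∏ j, m j).divisors | d ∈ I ∧ ∀ i, d ≠ n i}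

/-- The factorizations `e * ∏ aᵢ` with `aᵢ ∣ nᵢ` of elements of `I` that differ from every `nᵢ`.
Every new divisor arises in this way, with `e` a divisor of `∏ mⱼ`. -/
def newFactorizations (I : Finset ℕ) (e : ℕ) (n : ι → ℕ) : Finset (ι → ℕ) :=
  {a ∈ Fintype.piFinset fun i => (n i).divisors | e * ∏ i, a i ∈ I ∧ ∀ i, e * ∏ i, a i ≠ n i}

theorem card_newDivisors_le (I : Finset ℕ) (n : ι → ℕ) (m : κ → ℕ) :
    #(newDivisors I n m) ≤ ∑ e ∈ (∏ j, m j).divisors, #(newFactorizations I e n) := by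
  have hsub : newDivisors I n m ⊆ (∏ j, m j).divisors.biUnion fun e =>
      (newFactorizations I e n).image fun a => e * ∏ i, a i := by
    intro d hd
    obtain ⟨hdvd, hdI, hne⟩ := mem_filter.1 hd
    rw [mul_comm, Nat.divisors_mul] at hdvd
    obtain ⟨e, he, b, hb, rfl⟩ := mem_mul.1 hdvd
    obtain ⟨a, ha, rfl⟩ := exists_mem_divisors_of_mem_divisors_prod hb
    exact mem_biUnion.2 ⟨e, he, mem_image.2
      ⟨a, mem_filter.2 ⟨Fintype.mem_piFinset.2 ha, hdI, hne⟩, rfl⟩⟩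
  exact (card_le_card hsub).trans (card_biUnion_le.trans (sum_le_sum fun _ _ => card_image_le))

theorem card_filter_dvd_ne_piFinset_Ioc_le {x H M : ℕ} {a : ι → ℕ} (haM : ∀ i, a i ∣ M)
    (hM : M ∈ Ioc x (x + H)) :
    #{n ∈ Fintype.piFinset fun _ : ι => Ioc x (x + H) | ∀ i, a i ∣ n i ∧ M ≠ n i} ≤
      ∏ i, H / a i := by
  calc #{n ∈ Fintype.piFinset fun _ : ι => Ioc x (x + H) | ∀ i, a i ∣ n i ∧ M ≠ n i}
      ≤ #(Fintype.piFinset fun i => {n ∈ Ioc x (x + H) | a i ∣ n ∧ M ≠ n}) := by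
        refine card_le_card fun n hn => ?_
        simp only [mem_filter, Fintype.mem_piFinset] at hn ⊢
        exact fun i => ⟨hn.1 i, hn.2 i⟩
    _ = ∏ i, #{n ∈ Ioc x (x + H) | a i ∣ n ∧ M ≠ n} := Fintype.card_piFinset _
    _ ≤ ∏ i, H / a i := prod_le_prod' fun i _ => card_filter_dvd_ne_Ioc_le (haM i) hM

theorem sum_card_newFactorizations_Ioc_le (x H e : ℕ) :
    ∑ n ∈ Fintype.piFinset fun _ : ι => Ioc x (x + H),
        #(newFactorizations (Ioc x (x + H)) e n) ≤
      ∑ a ∈ Fintype.piFinset fun _ : ι => Icc 1 H with e * ∏ i, a i ∈ Ioc x (x + H),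
        ∏ i, H / a i := by
  set T := {a ∈ Fintype.piFinset fun _ : ι => Icc 1 H | e * ∏ i, a i ∈ Ioc x (x + H)}
  have hdvd (a : ι → ℕ) (i : ι) : a i ∣ e * ∏ i, a i := (dvd_prod_of_mem a (mem_univ i)).mul_left e
  calc ∑ n ∈ Fintype.piFinset fun _ : ι => Ioc x (x + H), #(newFactorizations (Ioc x (x + H)) e n)
      ≤ ∑ n ∈ Fintype.piFinset fun _ : ι => Ioc x (x + H),
          #{a ∈ T | ∀ i, a i ∣ n i ∧ e * ∏ i, a i ≠ n i} := by
        refine sum_le_sum fun n hn => card_le_card fun a ha => ?_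
        simp only [newFactorizations, mem_filter, Fintype.mem_piFinset] at ha hn
        obtain ⟨ha, hM, hne⟩ := ha
        refine mem_filter.2 ⟨mem_filter.2 ⟨Fintype.mem_piFinset.2 fun i => mem_Icc.2
          ⟨Nat.pos_of_mem_divisors (ha i), ?_⟩, hM⟩,
          fun i => ⟨Nat.dvd_of_mem_divisors (ha i), hne i⟩⟩
        exact le_of_dvd_of_mem_Ioc_of_ne (hdvd a i) hM (Nat.dvd_of_mem_divisors (ha i)) (hn i)
          (hne i)
    _ = ∑ a ∈ T, #{n ∈ Fintype.piFinset fun _ : ι => Ioc x (x + H) |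
          ∀ i, a i ∣ n i ∧ e * ∏ i, a i ≠ n i} :=
        sum_card_bipartiteAbove_eq_sum_card_bipartiteBelow _
    _ ≤ ∑ a ∈ T, ∏ i, H / a i := sum_le_sum fun a ha =>
        card_filter_dvd_ne_piFinset_Ioc_le (hdvd a) (mem_filter.1 ha).2

theorem sum_card_newFactorizations_le (X H e : ℕ) :
    ∑ p ∈ shortTuples ι X H, #(newFactorizations (Ioc p.1 (p.1 + H)) e p.2) ≤
      H * (∑ a ∈ Icc 1 H, H / a) ^ Fintype.card ι := by
  calc ∑ p ∈ shortTuples ι X H, #(newFactorizations (Ioc p.1 (p.1 + H)) e p.2)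
      ≤ ∑ x ∈ Icc 1 X, ∑ a ∈ Fintype.piFinset fun _ : ι => Icc 1 H
          with e * ∏ i, a i ∈ Ioc x (x + H), ∏ i, H / a i := by
        rw [shortTuples, sum_sigma]
        exact sum_le_sum fun x _ => sum_card_newFactorizations_Ioc_le x H e
    _ = ∑ a ∈ Fintype.piFinset fun _ : ι => Icc 1 H,
          #{x ∈ Icc 1 X | e * ∏ i, a i ∈ Ioc x (x + H)} * ∏ i, H / a i := by
        simp_rw [sum_filter]
        rw [sum_comm]
        simp_rw [← sum_filter, sum_const, smul_eq_mul]
    _ ≤ ∑ a ∈ Fintype.piFinset fun _ : ι => Icc 1 H, H * ∏ i, H / a i :=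
        sum_le_sum fun a _ => Nat.mul_le_mul_right _ (card_filter_mem_Ioc_le _ H _)
    _ = H * (∑ a ∈ Icc 1 H, H / a) ^ Fintype.card ι := by
        rw [← mul_sum, ← prod_univ_sum (fun _ => Icc 1 H) fun _ a => H / a, prod_const, card_univ]

theorem sum_card_newDivisors_le (X H : ℕ) (m : κ → ℕ) :
    ∑ p ∈ shortTuples ι X H, #(newDivisors (Ioc p.1 (p.1 + H)) p.2 m) ≤
      #(∏ j, m j).divisors * (H * (∑ a ∈ Icc 1 H, H / a) ^ Fintype.card ι) := by
  calc ∑ p ∈ shortTuples ι X H, #(newDivisors (Ioc p.1 (p.1 + H)) p.2 m)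
      ≤ ∑ e ∈ (∏ j, m j).divisors,
          ∑ p ∈ shortTuples ι X H, #(newFactorizations (Ioc p.1 (p.1 + H)) e p.2) := by
        rw [sum_comm]
        exact sum_le_sum fun p _ => card_newDivisors_le _ p.2 m
    _ ≤ ∑ _e ∈ (∏ j, m j).divisors, H * (∑ a ∈ Icc 1 H, H / a) ^ Fintype.card ι :=
        sum_le_sum fun e _ => sum_card_newFactorizations_le X H e
    _ = #(∏ j, m j).divisors * (H * (∑ a ∈ Icc 1 H, H / a) ^ Fintype.card ι) := by
        rw [sum_const, smul_eq_mul]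

variable [DecidableEq κ]

theorem sum_sum_card_newDivisors_le {X H : ℕ} (hHX : H ≤ X) :
    ∑ p ∈ shortTuples ι X H, ∑ q ∈ shortTuples κ X H,
        (#(newDivisors (Ioc p.1 (p.1 + H)) p.2 q.2) : ℝ) ≤
      2 * X * H ^ (Fintype.card ι + Fintype.card κ + 1) *
        logFactor X ^ (2 ^ Fintype.card κ + Fintype.card ι) := by
  have hdiv : ((∑ a ∈ Icc 1 H, H / a : ℕ) : ℝ) ≤ H * logFactor X := by
    refine (sum_div_le H).trans ?_
    gcongr
    exact one_add_log_le_logFactor (by omega)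
  have hdivisors := sum_card_divisors_prod_pow_le (ι := κ) hHX 1
  simp only [pow_one, one_mul] at hdivisors
  calc ∑ p ∈ shortTuples ι X H, ∑ q ∈ shortTuples κ X H,
        (#(newDivisors (Ioc p.1 (p.1 + H)) p.2 q.2) : ℝ)
      ≤ ∑ q ∈ shortTuples κ X H, #(∏ j, q.2 j).divisors *
          (H * ((∑ a ∈ Icc 1 H, H / a : ℕ) : ℝ) ^ Fintype.card ι) := by
        rw [sum_comm]
        refine sum_le_sum fun q _ => ?_
        have h := sum_card_newDivisors_le (ι := ι) X H q.2
        exact_mod_cast h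
    _ ≤ 2 * X * H ^ Fintype.card κ * logFactor X ^ 2 ^ Fintype.card κ *
          (H * (H * logFactor X) ^ Fintype.card ι) := by
        rw [← sum_mul]
        have := logFactor_nonneg X
        gcongr
    _ = 2 * X * H ^ (Fintype.card ι + Fintype.card κ + 1) *
          logFactor X ^ (2 ^ Fintype.card κ + Fintype.card ι) := by ring

theorem sum_sum_card_divisors_mul_pow_le {X H : ℕ} (hHX : H ≤ X) (A : ℕ) :
    ∑ p ∈ shortTuples ι X H, ∑ q ∈ shortTuples κ X H,
        (#((∏ i, p.2 i) * ∏ j, q.2 j).divisors : ℝ) ^ A ≤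
      4 * X ^ 2 * H ^ (Fintype.card ι + Fintype.card κ) *
        logFactor X ^ (2 ^ (A * Fintype.card ι) + 2 ^ (A * Fintype.card κ)) := by
  have hL := logFactor_nonneg X
  calc ∑ p ∈ shortTuples ι X H, ∑ q ∈ shortTuples κ X H,
        (#((∏ i, p.2 i) * ∏ j, q.2 j).divisors : ℝ) ^ A
      ≤ ∑ p ∈ shortTuples ι X H, ∑ q ∈ shortTuples κ X H,
          (#(∏ i, p.2 i).divisors : ℝ) ^ A * (#(∏ j, q.2 j).divisors : ℝ) ^ A := by
        refine sum_le_sum fun p _ => sum_le_sum fun q _ => ?_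
        rw [← mul_pow]
        gcongr
        exact_mod_cast card_divisors_mul_le _ _
    _ = (∑ p ∈ shortTuples ι X H, (#(∏ i, p.2 i).divisors : ℝ) ^ A) *
          ∑ q ∈ shortTuples κ X H, (#(∏ j, q.2 j).divisors : ℝ) ^ A := (sum_mul_sum ..).symm
    _ ≤ (2 * X * H ^ Fintype.card ι * logFactor X ^ 2 ^ (A * Fintype.card ι)) *
          (2 * X * H ^ Fintype.card κ * logFactor X ^ 2 ^ (A * Fintype.card κ)) := by
        gcongr
        · exact sum_card_divisors_prod_pow_le hHX A
        · exact sum_card_divisors_prod_pow_le hHX A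
    _ = 4 * X ^ 2 * H ^ (Fintype.card ι + Fintype.card κ) *
          logFactor X ^ (2 ^ (A * Fintype.card ι) + 2 ^ (A * Fintype.card κ)) := by ring

end Windows

section CauchySchwarz

variable {ι κ : Type*} [Fintype ι] [DecidableEq ι] [Fintype κ] [DecidableEq κ]

theorem sq_sum_sum_card_newDivisors_mul_pow_le (X H K : ℕ) :
    (∑ p ∈ shortTuples ι X H, ∑ q ∈ shortTuples κ X H,
        (#(newDivisors (Ioc p.1 (p.1 + H)) p.2 q.2) : ℝ) *
          (#((∏ i, p.2 i) * ∏ j, q.2 j).divisors : ℝ) ^ K) ^ 2 ≤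
      (∑ p ∈ shortTuples ι X H, ∑ q ∈ shortTuples κ X H,
        (#(newDivisors (Ioc p.1 (p.1 + H)) p.2 q.2) : ℝ)) *
      ∑ p ∈ shortTuples ι X H, ∑ q ∈ shortTuples κ X H,
        (#((∏ i, p.2 i) * ∏ j, q.2 j).divisors : ℝ) ^ (2 * K + 1) := by
  simp_rw [← sum_product']
  refine sum_sq_le_sum_mul_sum_of_sq_le_mul _ (fun _ _ => by positivity)
    (fun _ _ => by positivity) fun r _ => ?_
  set g : ℝ := (#(newDivisors (Ioc r.1.1 (r.1.1 + H)) r.1.2 r.2.2) : ℝ)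
  set D : ℝ := (#((∏ i, r.1.2 i) * ∏ j, r.2.2 j).divisors : ℝ)
  have hgD : g ≤ D := Nat.cast_le.2 (card_filter_le _ _)
  calc (g * D ^ K) ^ 2 = g * (g * D ^ (2 * K)) := by ring
    _ ≤ g * (D * D ^ (2 * K)) := by gcongr
    _ = g * D ^ (2 * K + 1) := by ring

variable (ι κ) in
theorem exists_sum_sum_card_newDivisors_mul_pow_le (K : ℕ) :
    ∃ C B : ℕ, ∀ X H : ℕ, H ≤ X →
      ∑ p ∈ shortTuples ι X H, ∑ q ∈ shortTuples κ X H,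
          (#(newDivisors (Ioc p.1 (p.1 + H)) p.2 q.2) : ℝ) *
            (#((∏ i, p.2 i) * ∏ j, q.2 j).divisors : ℝ) ^ K ≤
        X ^ 2 * H ^ (Fintype.card ι + Fintype.card κ) * (C * logFactor X ^ B * √(H / X)) := by
  set s := Fintype.card ι + Fintype.card κ
  set B₁ := 2 ^ Fintype.card κ + Fintype.card ι
  set B₂ := 2 ^ ((2 * K + 1) * Fintype.card ι) + 2 ^ ((2 * K + 1) * Fintype.card κ)
  refine ⟨3, B₁ + B₂, fun X H hHX => ?_⟩
  have hL := one_le_logFactor X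
  have hL₀ := logFactor_nonneg X
  refine le_of_sq_le_sq ?_ (by positivity)
  calc _ ≤ (2 * X * H ^ (s + 1) * logFactor X ^ B₁) * (4 * X ^ 2 * H ^ s * logFactor X ^ B₂) := by
        refine (sq_sum_sum_card_newDivisors_mul_pow_le X H K).trans ?_
        gcongr
        · exact sum_sum_card_newDivisors_le hHX
        · exact sum_sum_card_divisors_mul_pow_le hHX (2 * K + 1)
    _ = 8 * (X ^ 4 * (H / X)) * H ^ (2 * s) * logFactor X ^ (B₁ + B₂) := by
        have hX : (X : ℝ) ^ 4 * (H / X) = X ^ 3 * H := by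
          rcases X.eq_zero_or_pos with rfl | hX
          · simp
          · field_simp
        rw [hX]
        ring
    _ ≤ 9 * (X ^ 4 * (H / X)) * H ^ (2 * s) * logFactor X ^ ((B₁ + B₂) * 2) := by
        gcongr <;> first | exact hL | omega | norm_num
    _ = (X ^ 2 * H ^ s * (3 * logFactor X ^ (B₁ + B₂) * √(H / X))) ^ 2 := by
        rw [mul_pow, mul_pow _ √_, Real.sq_sqrt (by positivity)]
        ring

end CauchySchwarz

section Solutions

variable {k l : ℕ} {I J : Finset ℕ}

/-- The solutions of `∏ nᵢ * ∏ mⱼ = ∏ n'ᵢ * ∏ m'ⱼ` with `k` variables `nᵢ, n'ᵢ ∈ I` and `l`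
variables `mⱼ, m'ⱼ ∈ J` on each side, as tuples `(n, n', m, m')`. -/
def prodSolutions (k l : ℕ) (I J : Finset ℕ) :
    Finset ((Fin k → ℕ) × (Fin k → ℕ) × (Fin l → ℕ) × (Fin l → ℕ)) :=
  {t ∈ (Fintype.piFinset fun _ => I) ×ˢ (Fintype.piFinset fun _ => I) ×ˢ
      (Fintype.piFinset fun _ => J) ×ˢ (Fintype.piFinset fun _ => J) |
    (∏ i, t.1 i) * (∏ i, t.2.2.1 i) = (∏ i, t.2.1 i) * (∏ i, t.2.2.2 i)}

theorem mem_prodSolutions {t : (Fin k → ℕ) × (Fin k → ℕ) × (Fin l → ℕ) × (Fin l → ℕ)} :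
    t ∈ prodSolutions k l I J ↔ (∀ i, t.1 i ∈ I) ∧ (∀ i, t.2.1 i ∈ I) ∧
      (∀ i, t.2.2.1 i ∈ J) ∧ (∀ i, t.2.2.2 i ∈ J) ∧
      (∏ i, t.1 i) * (∏ i, t.2.2.1 i) = (∏ i, t.2.1 i) * (∏ i, t.2.2.2 i) := by
  simp only [prodSolutions, mem_filter, mem_product, Fintype.mem_piFinset, and_assoc]

theorem crossCount_eq_card_prodSolutions (k x₁ x₂ H : ℕ) :
    crossCount k x₁ x₂ H = #(prodSolutions k k (Ioc x₁ (x₁ + H)) (Ioc x₂ (x₂ + H))) :=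
  Nat.subtype_card _ fun _ => mem_prodSolutions

theorem card_prodSolutions_comm (k l : ℕ) (I J : Finset ℕ) :
    #(prodSolutions k l I J) = #(prodSolutions l k J I) := by
  refine card_nbij' (fun t => (t.2.2.1, t.2.2.2, t.1, t.2.1))
    (fun t => (t.2.2.1, t.2.2.2, t.1, t.2.1)) ?_ ?_ (fun _ _ => rfl) (fun _ _ => rfl) <;>
  · intro t ht
    obtain ⟨hn, hn', hm, hm', h⟩ := mem_prodSolutions.1 ht
    exact mem_prodSolutions.2 ⟨hm, hm', hn, hn', by rw [mul_comm, h, mul_comm]⟩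

theorem card_prodSolutions_zero_zero (I J : Finset ℕ) : #(prodSolutions 0 0 I J) = 1 := by
  simp [prodSolutions]

theorem descFactorial_mul_factorial_le_card_prodSolutions (k l : ℕ) (I J : Finset ℕ) :
    (#I).descFactorial k * k.factorial * ((#J).descFactorial l * l.factorial) ≤
      #(prodSolutions k l I J) := by
  have hcard : #(univ : Finset ((Fin k ↪ I) × Equiv.Perm (Fin k) ×
      (Fin l ↪ J) × Equiv.Perm (Fin l))) =
      (#I).descFactorial k * k.factorial * ((#J).descFactorial l * l.factorial) := by
    simp only [card_univ, Fintype.card_prod, Fintype.card_embedding_eq, Fintype.card_fin,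
      Fintype.card_coe, Fintype.card_perm, mul_assoc]
  rw [← hcard]
  refine card_le_card_of_injOn (fun t => (fun i => t.1 i, fun i => t.1 (t.2.1 i),
    fun j => t.2.2.1 j, fun j => t.2.2.1 (t.2.2.2 j))) ?_ ?_
  · rintro ⟨f, σ, g, τ⟩ -
    refine mem_prodSolutions.2 ⟨fun i => (f i).2, fun i => (f (σ i)).2, fun j => (g j).2,
      fun j => (g (τ j)).2, ?_⟩
    rw [Equiv.prod_comp σ fun i => (f i : ℕ), Equiv.prod_comp τ fun j => (g j : ℕ)]
  · rintro ⟨f, σ, g, τ⟩ - ⟨f', σ', g', τ'⟩ - h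
    simp only [Prod.mk.injEq, funext_iff, SetLike.coe_eq_coe] at h
    obtain ⟨hf, hσ, hg, hτ⟩ := h
    obtain rfl : f = f' := DFunLike.ext _ _ hf
    obtain rfl : g = g' := DFunLike.ext _ _ hg
    obtain rfl : σ = σ' := Equiv.ext fun i => f.injective (hσ i)
    obtain rfl : τ = τ' := Equiv.ext fun j => g.injective (hτ j)
    rfl

/-- The solutions in which `n'₀` differs from every `nᵢ`, so that it cannot be cancelled against
one of them. -/
def unmatchedSolutions (k l : ℕ) (I J : Finset ℕ) :
    Finset ((Fin (k + 1) → ℕ) × (Fin (k + 1) → ℕ) × (Fin l → ℕ) × (Fin l → ℕ)) :=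
  {t ∈ prodSolutions (k + 1) l I J | ∀ i, t.2.1 0 ≠ t.1 i}

theorem card_filter_matched_le (hI : 0 ∉ I) (i : Fin (k + 1)) :
    #{t ∈ prodSolutions (k + 1) l I J | t.2.1 0 = t.1 i} ≤ #I * #(prodSolutions k l I J) := by
  rw [← card_product]
  refine card_le_card_of_injOn
    (fun t => (t.1 i, (i.removeNth t.1, Fin.tail t.2.1, t.2.2.1, t.2.2.2))) ?_ ?_
  · rintro ⟨n, n', m, m'⟩ ht
    have hmatch : n' 0 = n i := (mem_filter.1 ht).2
    obtain ⟨hn, hn', hm, hm', h⟩ := mem_prodSolutions.1 (mem_filter.1 ht).1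
    refine mem_product.2 ⟨hn i, mem_prodSolutions.2
      ⟨fun j => hn _, fun j => hn' _, hm, hm', ?_⟩⟩
    have hpos : n i ≠ 0 := ne_of_mem_of_not_mem (hn i) hI
    rw [Fin.prod_univ_succAbove n i, Fin.prod_univ_succ n', hmatch, mul_assoc, mul_assoc] at h
    exact Nat.eq_of_mul_eq_mul_left (Nat.pos_of_ne_zero hpos) h
  · rintro ⟨n, n', m, m'⟩ ht ⟨p, p', q, q'⟩ hu h
    have hn₀ : n' 0 = n i := (mem_filter.1 ht).2
    have hp₀ : p' 0 = p i := (mem_filter.1 hu).2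
    simp only [Prod.mk.injEq] at h
    obtain ⟨hi, hremove, htail, rfl, rfl⟩ := h
    obtain rfl : n = p := by
      rw [← Fin.insertNth_self_removeNth i n, ← Fin.insertNth_self_removeNth i p, hi, hremove]
    obtain rfl : n' = p' := by
      rw [← Fin.cons_self_tail n', ← Fin.cons_self_tail p', htail, hn₀, hp₀]
    rfl

theorem card_prodSolutions_succ_le (hI : 0 ∉ I) :
    #(prodSolutions (k + 1) l I J) ≤
      #(unmatchedSolutions k l I J) + (k + 1) * (#I * #(prodSolutions k l I J)) := by
  have hsub : prodSolutions (k + 1) l I J ⊆ unmatchedSolutions k l I J ∪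
      univ.biUnion fun i => {t ∈ prodSolutions (k + 1) l I J | t.2.1 0 = t.1 i} := by
    intro t ht
    by_cases h : ∀ i, t.2.1 0 ≠ t.1 i
    · exact mem_union_left _ (mem_filter.2 ⟨ht, h⟩)
    · push Not at h
      obtain ⟨i, hi⟩ := h
      exact mem_union_right _ (mem_biUnion.2 ⟨i, mem_univ _, mem_filter.2 ⟨ht, hi⟩⟩)
  have hmatched : #(univ.biUnion fun i => {t ∈ prodSolutions (k + 1) l I J | t.2.1 0 = t.1 i}) ≤
      (k + 1) * (#I * #(prodSolutions k l I J)) := by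
    simpa using card_biUnion_le_card_mul univ _ _ fun i _ => card_filter_matched_le (J := J) hI i
  exact (card_le_card hsub).trans ((card_union_le _ _).trans (Nat.add_le_add_left hmatched _))

theorem card_unmatchedSolutions_le (hI : 0 ∉ I) (hJ : 0 ∉ J) :
    #(unmatchedSolutions k l I J) ≤
      ∑ n ∈ Fintype.piFinset fun _ : Fin (k + 1) => I, ∑ m ∈ Fintype.piFinset fun _ : Fin l => J,
        #(newDivisors I n m) * #((∏ i, n i) * ∏ j, m j).divisors ^ (k + l) := by
  set D : (Fin (k + 1) → ℕ) × (Fin l → ℕ) → Finset ℕ := fun p =>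
    ((∏ i, p.1 i) * ∏ j, p.2 j).divisors
  have hcard (p : (Fin (k + 1) → ℕ) × (Fin l → ℕ)) :
      #(newDivisors I p.1 p.2) * #(D p) ^ (k + l) = #(newDivisors I p.1 p.2 ×ˢ
        (Fintype.piFinset fun _ : Fin k => D p) ×ˢ (Fintype.piFinset fun _ : Fin l => D p)) := by
    simp [card_product, Fintype.card_piFinset, pow_add]
  rw [← sum_product', sum_congr rfl fun p _ => hcard p, ← card_sigma]
  refine card_le_card_of_injOn
    (fun t => ⟨(t.1, t.2.2.1), (t.2.1 0, Fin.tail t.2.1, t.2.2.2)⟩) ?_ ?_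
  · rintro ⟨n, n', m, m'⟩ ht
    obtain ⟨hsol, hne⟩ := mem_filter.1 ht
    obtain ⟨hn, hn', hm, _, h⟩ := mem_prodSolutions.1 hsol
    have hprod : (∏ i, n i) * ∏ j, m j ≠ 0 := mul_ne_zero
      (prod_ne_zero_iff.2 fun i _ => ne_of_mem_of_not_mem (hn i) hI)
      (prod_ne_zero_iff.2 fun j _ => ne_of_mem_of_not_mem (hm j) hJ)
    have hdvd (i) : n' i ∈ D (n, m) :=
      Nat.mem_divisors.2 ⟨h ▸ (dvd_prod_of_mem n' (mem_univ i)).mul_right _, hprod⟩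
    have hdvd' (j) : m' j ∈ D (n, m) :=
      Nat.mem_divisors.2 ⟨h ▸ (dvd_prod_of_mem m' (mem_univ j)).mul_left _, hprod⟩
    simp only [coe_sigma, Set.mem_sigma_iff, mem_coe, mem_product, Fintype.mem_piFinset,
      newDivisors, mem_filter]
    exact ⟨⟨hn, hm⟩, ⟨hdvd 0, hn' 0, hne⟩, fun i => hdvd _, hdvd'⟩
  · rintro ⟨n, n', m, m'⟩ - ⟨p, p', q, q'⟩ - h
    simp only [Sigma.mk.injEq, Prod.mk.injEq, heq_eq_eq] at h
    obtain ⟨⟨rfl, rfl⟩, hzero, htail, rfl⟩ := h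
    obtain rfl : n' = p' := by
      rw [← Fin.cons_self_tail n', ← Fin.cons_self_tail p', hzero, htail]
    rfl

end Solutions

section Averages

/-- The sum over `1 ≤ x, y ≤ X` of the number of solutions with the `k` variables on each side in
`(x, x + H]` and the `l` variables on each side in `(y, y + H]`. -/
def totalSolutions (k l X H : ℕ) : ℕ :=
  ∑ x ∈ Icc 1 X, ∑ y ∈ Icc 1 X, #(prodSolutions k l (Ioc x (x + H)) (Ioc y (y + H)))

theorem exists_sum_card_unmatchedSolutions_le (k l : ℕ) :
    ∃ C B : ℕ, ∀ X H : ℕ, H ≤ X →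
      ∑ x ∈ Icc 1 X, ∑ y ∈ Icc 1 X,
          (#(unmatchedSolutions k l (Ioc x (x + H)) (Ioc y (y + H))) : ℝ) ≤
        X ^ 2 * H ^ (k + 1 + l) * (C * logFactor X ^ B * √(H / X)) := by
  obtain ⟨C, B, h⟩ := exists_sum_sum_card_newDivisors_mul_pow_le (Fin (k + 1)) (Fin l) (k + l)
  refine ⟨C, B, fun X H hHX => ?_⟩
  calc ∑ x ∈ Icc 1 X, ∑ y ∈ Icc 1 X,
        (#(unmatchedSolutions k l (Ioc x (x + H)) (Ioc y (y + H))) : ℝ)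
      ≤ ∑ p ∈ shortTuples (Fin (k + 1)) X H, ∑ q ∈ shortTuples (Fin l) X H,
          (#(newDivisors (Ioc p.1 (p.1 + H)) p.2 q.2) : ℝ) *
            (#((∏ i, p.2 i) * ∏ j, q.2 j).divisors : ℝ) ^ (k + l) := by
        simp_rw [shortTuples, sum_sigma]
        refine sum_le_sum fun x _ => ?_
        rw [sum_comm]
        refine sum_le_sum fun y _ => ?_
        have hcard := card_unmatchedSolutions_le (k := k) (l := l) (I := Ioc x (x + H))
          (J := Ioc y (y + H)) (by simp) (by simp)
        exact_mod_cast hcard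
    _ ≤ X ^ 2 * H ^ (k + 1 + l) * (C * logFactor X ^ B * √(H / X)) := by
        simpa only [Fintype.card_fin] using h X H hHX

/-- The mean number of solutions is at most `k! * l! * H ^ (k + l)`, up to a relative error
`√(H / X)` times a power of `log X`. -/
def MeanSolutionsBound (k l : ℕ) : Prop :=
  ∃ C B : ℕ, ∀ X H : ℕ, H ≤ X → (totalSolutions k l X H : ℝ) ≤
    X ^ 2 * H ^ (k + l) * (k.factorial * l.factorial + C * logFactor X ^ B * √(H / X))

variable {k l : ℕ}

theorem totalSolutions_comm (k l X H : ℕ) : totalSolutions k l X H = totalSolutions l k X H := by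
  rw [totalSolutions, sum_comm, totalSolutions]
  simp_rw [card_prodSolutions_comm k l]

theorem totalSolutions_succ_le (k l X H : ℕ) :
    totalSolutions (k + 1) l X H ≤
      ∑ x ∈ Icc 1 X, ∑ y ∈ Icc 1 X, #(unmatchedSolutions k l (Ioc x (x + H)) (Ioc y (y + H))) +
        (k + 1) * (H * totalSolutions k l X H) := by
  simp_rw [totalSolutions, mul_sum, ← sum_add_distrib]
  gcongr with x _ y _
  simpa using card_prodSolutions_succ_le (k := k) (l := l) (J := Ioc y (y + H))
    (I := Ioc x (x + H)) (by simp)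

theorem MeanSolutionsBound.symm (h : MeanSolutionsBound k l) : MeanSolutionsBound l k := by
  obtain ⟨C, B, h⟩ := h
  refine ⟨C, B, fun X H hHX => ?_⟩
  rw [totalSolutions_comm, add_comm l k, mul_comm (l.factorial : ℝ)]
  exact h X H hHX

theorem meanSolutionsBound_zero_zero : MeanSolutionsBound 0 0 :=
  ⟨0, 0, fun X H _ => by simp [totalSolutions, card_prodSolutions_zero_zero, sq]⟩

theorem MeanSolutionsBound.succ (h : MeanSolutionsBound k l) : MeanSolutionsBound (k + 1) l := by
  obtain ⟨C₁, B₁, hmatched⟩ := h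
  obtain ⟨C₂, B₂, hunmatched⟩ := exists_sum_card_unmatchedSolutions_le k l
  refine ⟨C₂ + (k + 1) * C₁, B₁ + B₂, fun X H hHX => ?_⟩
  have hL := one_le_logFactor X
  have hsucc := totalSolutions_succ_le k l X H
  calc (totalSolutions (k + 1) l X H : ℝ)
      ≤ ∑ x ∈ Icc 1 X, ∑ y ∈ Icc 1 X,
          (#(unmatchedSolutions k l (Ioc x (x + H)) (Ioc y (y + H))) : ℝ) +
        (k + 1) * (H * totalSolutions k l X H) := by exact_mod_cast hsucc
    _ ≤ X ^ 2 * H ^ (k + 1 + l) * (C₂ * logFactor X ^ (B₁ + B₂) * √(H / X)) +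
        (k + 1) * (H * (X ^ 2 * H ^ (k + l) *
          (k.factorial * l.factorial + C₁ * logFactor X ^ (B₁ + B₂) * √(H / X)))) := by
        gcongr
        · refine (hunmatched X H hHX).trans ?_
          gcongr
          omega
        · refine (hmatched X H hHX).trans ?_
          gcongr
          omega
    _ = X ^ 2 * H ^ (k + 1 + l) * ((k + 1).factorial * l.factorial +
          (C₂ + (k + 1) * C₁ : ℕ) * logFactor X ^ (B₁ + B₂) * √(H / X)) := by
        push_cast [Nat.factorial_succ]
        ring

theorem meanSolutionsBound (k l : ℕ) : MeanSolutionsBound k l := by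
  have hzero (l : ℕ) : MeanSolutionsBound l 0 := by
    induction l with
    | zero => exact meanSolutionsBound_zero_zero
    | succ l ih => exact ih.succ
  induction k with
  | zero => exact (hzero l).symm
  | succ k ih => exact ih.succ

theorem descFactorial_mul_factorial_le_totalSolutions (k l X H : ℕ) :
    X ^ 2 * (H.descFactorial k * k.factorial * (H.descFactorial l * l.factorial)) ≤
      totalSolutions k l X H := by
  have hconst : X ^ 2 * (H.descFactorial k * k.factorial * (H.descFactorial l * l.factorial)) =
      ∑ _x ∈ Icc 1 X, ∑ _y ∈ Icc 1 X,
        H.descFactorial k * k.factorial * (H.descFactorial l * l.factorial) := by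
    simp only [sum_const, Nat.card_Icc, Nat.add_sub_cancel, smul_eq_mul]
    ring
  rw [hconst, totalSolutions]
  gcongr with x _ y _
  simpa using descFactorial_mul_factorial_le_card_prodSolutions k l (Ioc x (x + H)) (Ioc y (y + H))

end Averages

section Limits

open Filter Topology

theorem tendsto_descFactorial_div_pow (k : ℕ) :
    Tendsto (fun n : ℕ => (n.descFactorial k : ℝ) / (n : ℝ) ^ k) atTop (𝓝 1) :=
  (Asymptotics.isEquivalent_iff_tendsto_one (by
    filter_upwards [eventually_gt_atTop 0] with n hn
    positivity)).1 (isEquivalent_descFactorial k)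

theorem tendsto_log_natCast_atTop : Tendsto (fun X : ℕ => Real.log X) atTop atTop :=
  Real.tendsto_log_atTop.comp tendsto_natCast_atTop_atTop

theorem logFactor_le_three_mul_log {X : ℕ} (hX : 1 ≤ Real.log X) :
    logFactor X ≤ 3 * Real.log X := by
  have hX₀ : (X : ℝ) ≠ 0 := by
    intro h
    rw [h, Real.log_zero] at hX
    linarith
  rw [logFactor, Real.log_mul two_ne_zero hX₀]
  linarith [Real.log_two_lt_d9]

theorem eventually_le_of_eventually_le_mul_log_rpow_neg {H : ℕ → ℕ} {c : ℝ} (hc : 0 ≤ c)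
    (hle : ∀ᶠ X in atTop, (H X : ℝ) ≤ (X : ℝ) * Real.log X ^ (-c)) :
    ∀ᶠ X in atTop, H X ≤ X := by
  filter_upwards [hle, tendsto_log_natCast_atTop.eventually_ge_atTop 1] with X hX hlog
  have h : (H X : ℝ) ≤ X := hX.trans (mul_le_of_le_one_right (by positivity)
    (Real.rpow_le_one_of_one_le_of_nonpos hlog (neg_nonpos.2 hc)))
  exact_mod_cast h

theorem logFactor_pow_mul_sqrt_le {B X H : ℕ} (hX : 1 ≤ Real.log X)
    (hle : (H : ℝ) ≤ X * Real.log X ^ (-(2 * B + 2 : ℝ))) :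
    logFactor X ^ B * √(H / X) ≤ 3 ^ B / Real.log X := by
  set L := Real.log X
  have hL₀ : 0 < L := by linarith
  have hratio : (H : ℝ) / X ≤ ((L ^ (B + 1))⁻¹) ^ 2 := by
    have hpow : L ^ (-(2 * B + 2 : ℝ)) = ((L ^ (B + 1))⁻¹) ^ 2 := by
      rw [Real.rpow_neg hL₀.le, inv_pow, ← pow_mul, ← Real.rpow_natCast]
      push_cast
      ring_nf
    rw [← hpow]
    exact div_le_of_le_mul₀ (by positivity) (by positivity) (by rwa [mul_comm])
  calc logFactor X ^ B * √(H / X) ≤ (3 * L) ^ B * (L ^ (B + 1))⁻¹ := by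
        have := logFactor_nonneg X
        gcongr
        · exact logFactor_le_three_mul_log hX
        · exact Real.sqrt_le_iff.2 ⟨by positivity, hratio⟩
    _ = 3 ^ B / L := by
        rw [mul_pow, pow_succ]
        field_simp

theorem tendsto_logFactor_pow_mul_sqrt {H : ℕ → ℕ} {B : ℕ}
    (hle : ∀ᶠ X in atTop, (H X : ℝ) ≤ (X : ℝ) * Real.log X ^ (-(2 * B + 2 : ℝ))) :
    Tendsto (fun X : ℕ => logFactor X ^ B * √(H X / X)) atTop (𝓝 0) := by
  refine squeeze_zero' (.of_forall fun X => ?_) ?_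
    (tendsto_log_natCast_atTop.const_div_atTop (3 ^ B))
  · have := logFactor_nonneg X
    positivity
  · filter_upwards [hle, tendsto_log_natCast_atTop.eventually_ge_atTop 1] with X hX hlog
    exact logFactor_pow_mul_sqrt_le hlog hX

theorem exists_tendsto_totalSolutions_div (k l : ℕ) :
    ∃ c : ℝ, 0 < c ∧ ∀ H : ℕ → ℕ, Tendsto H atTop atTop →
      (∀ᶠ X in atTop, (H X : ℝ) ≤ (X : ℝ) * Real.log X ^ (-c)) →
      Tendsto (fun X : ℕ => (totalSolutions k l X (H X) : ℝ) / (X ^ 2 * H X ^ (k + l))) atTop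
        (𝓝 (k.factorial * l.factorial)) := by
  obtain ⟨C, B, hupper⟩ := meanSolutionsBound k l
  refine ⟨2 * B + 2, by positivity, fun H hH hle => ?_⟩
  have hlower_lim := (((tendsto_descFactorial_div_pow k).comp hH).mul_const (k.factorial : ℝ)).mul
    (((tendsto_descFactorial_div_pow l).comp hH).mul_const (l.factorial : ℝ))
  have hupper_lim := ((tendsto_logFactor_pow_mul_sqrt hle).const_mul (C : ℝ)).const_add
    (k.factorial * l.factorial : ℝ)
  simp only [one_mul, mul_zero, add_zero, Function.comp_apply] at hlower_lim hupper_lim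
  refine tendsto_of_tendsto_of_tendsto_of_le_of_le' hlower_lim hupper_lim ?_ ?_
  · filter_upwards [hH.eventually_gt_atTop 0, eventually_gt_atTop 0] with X hHX hX
    rw [le_div_iff₀ (by positivity)]
    calc _ = (X : ℝ) ^ 2 * ((H X).descFactorial k * k.factorial *
          ((H X).descFactorial l * l.factorial)) := by
          field_simp
          ring
      _ ≤ _ := by exact_mod_cast descFactorial_mul_factorial_le_totalSolutions k l X (H X)
  · filter_upwards [hH.eventually_gt_atTop 0, eventually_gt_atTop 0,
      eventually_le_of_eventually_le_mul_log_rpow_neg (by positivity) hle] with X hHX hX hHleX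
    rw [div_le_iff₀' (by positivity), ← mul_assoc]
    exact hupper X (H X) hHleX

theorem stmt17_general (k l : ℕ) :
    ∃ c : ℝ, 0 < c ∧ ∀ H : ℕ → ℕ, Tendsto H atTop atTop →
      (∀ᶠ X in atTop, (H X : ℝ) ≤ (X : ℝ) * Real.log X ^ (-c)) →
      Tendsto (fun X : ℕ =>
        ((1 / (X : ℝ) ^ 2) * (∑ x₁ ∈ Icc 1 X, ∑ x₂ ∈ Icc 1 X,
            (#(prodSolutions k l (Ioc x₁ (x₁ + H X)) (Ioc x₂ (x₂ + H X))) : ℝ))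
          - k.factorial * l.factorial * (H X : ℝ) ^ (k + l)) / (H X : ℝ) ^ (k + l))
        atTop (𝓝 0) := by
  obtain ⟨c, hc, h⟩ := exists_tendsto_totalSolutions_div k l
  refine ⟨c, hc, fun H hH hle => ?_⟩
  have hlim := (h H hH hle).sub_const (k.factorial * l.factorial : ℝ)
  rw [sub_self] at hlim
  refine hlim.congr' ?_
  filter_upwards [hH.eventually_gt_atTop 0, eventually_gt_atTop 0] with X hHX hX
  push_cast [totalSolutions]
  field_simp

end Limits

/-- for every `k ≥ 1` there is `c_k > 0` such that for every
`H : ℕ → ℕ` with `H(X) → ∞` and `H(X) ≤ X·(log X)^{−c_k}` for all large `X`,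
`((1/X²) ∑_{x₁=1}^{X} ∑_{x₂=1}^{X} T(x₁,x₂) − k!²·H(X)^{2k}) / H(X)^{2k} → 0`. -/
theorem stmt17 (k : ℕ) (hk : 1 ≤ k) :
    ∃ c : ℝ, 0 < c ∧ ∀ H : ℕ → ℕ,
      Filter.Tendsto H Filter.atTop Filter.atTop →
      (∀ᶠ X in Filter.atTop, (H X : ℝ) ≤ (X : ℝ) * Real.log X ^ (-c)) →
      Filter.Tendsto (fun X : ℕ =>
        ((1 / (X : ℝ) ^ 2) * (∑ x₁ ∈ Finset.Icc 1 X, ∑ x₂ ∈ Finset.Icc 1 X,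
            (crossCount k x₁ x₂ (H X) : ℝ))
          - ((k.factorial : ℝ)) ^ 2 * (H X : ℝ) ^ (2 * k)) / (H X : ℝ) ^ (2 * k))
        Filter.atTop (nhds 0) := by
  simpa only [crossCount_eq_card_prodSolutions, two_mul, sq] using stmt17_general k k
end
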